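/- Let X be the punctured Möbius band with boundary circles C₁ and C₂. If f : X → X is a boundary-preserving map such that both restrictions f|C₁ : C₁ → ∂X and f|C₂ : C₂ → ∂X are inessential, then f is boundary-homotopic to a map g : X → X whose fixed point set {x ∈ X : g(x) = x} has at most two elements. -/

import Mathlib

open Set

namespace PMB

/-- The square [0,1] × [−1,1] as a subspace of ℝ². -/
def Sq : Set (ℝ × ℝ) := Set.Icc 0 1 ×ˢ Set.Icc (-1) 1

/-- The identification (0,y) ∼ (1,−y) on the square. -/
def rel (p q : Sq) : Prop :=
  (p : ℝ × ℝ) = (q : ℝ × ℝ) ∨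
  ((p : ℝ × ℝ).1 = 0 ∧ (q : ℝ × ℝ).1 = 1 ∧ (p : ℝ × ℝ).2 = -(q : ℝ × ℝ).2) ∨
  ((p : ℝ × ℝ).1 = 1 ∧ (q : ℝ × ℝ).1 = 0 ∧ (q : ℝ × ℝ).2 = -(p : ℝ × ℝ).2)

/-- The Möbius band: the quotient of the square by the identification. -/
def M := Quot rel

instance : TopologicalSpace M := inferInstanceAs (TopologicalSpace (Quot rel))

/-- The quotient map. -/
def qm : Sq → M := Quot.mk rel

/-- The open disc of radius 1/4 centred at (1/2, 0). -/
def Bdisc : Set (ℝ × ℝ) := Metric.ball (1/2, 0) (1/4)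

/-- The circle of radius 1/4 centred at (1/2, 0). -/
def Scirc : Set (ℝ × ℝ) := Metric.sphere (1/2, 0) (1/4)

/-- The punctured Möbius band, as a subset of the Möbius band. -/
def Xset : Set M := {m | m ∉ qm '' {p : Sq | (p : ℝ × ℝ) ∈ Bdisc}}

/-- The punctured Möbius band as a topological space. -/
abbrev X : Type := ↥Xset

/-- The boundary circle of the Möbius band. -/
def C1 : Set X := {x | ∃ p : Sq, qm p = (x : M) ∧ ((p : ℝ × ℝ).2 = 1 ∨ (p : ℝ × ℝ).2 = -1)}

/-- The boundary circle coming from the removed disc. -/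
def C2 : Set X := {x | ∃ p : Sq, qm p = (x : M) ∧ (p : ℝ × ℝ) ∈ Scirc}

/-- The boundary of the punctured Möbius band. -/
def Bd : Set X := C1 ∪ C2

/-- A self-map of the punctured Möbius band is boundary-preserving if it sends ∂X into ∂X. -/
def BoundaryPreserving (f : C(X, X)) : Prop := MapsTo f Bd Bd

/-- Two self-maps are boundary-homotopic if there is a homotopy between them keeping
∂X inside ∂X at all times. -/
def BoundaryHomotopic (f g : C(X, X)) : Prop :=
  ∃ H : ContinuousMap.Homotopy f g, ∀ x : X, x ∈ Bd → ∀ t : unitInterval, H (t, x) ∈ Bd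

/-- A continuous map is inessential if it is homotopic to a constant map. -/
def Inessential {α β : Type*} [TopologicalSpace α] [TopologicalSpace β] (f : C(α, β)) : Prop :=
  ∃ b : β, ContinuousMap.Homotopic f (ContinuousMap.const α b)

/-- A continuous map is essential if it is not homotopic to a constant map. -/
def Essential {α β : Type*} [TopologicalSpace α] [TopologicalSpace β] (f : C(α, β)) : Prop :=
  ¬ Inessential f

/-- The restriction of a self-map of X to a subset `s` mapped into a subset `t`,
as a continuous map between the subspaces. -/
def restrictMap (f : C(X, X)) {s t : Set X} (h : MapsTo f s t) : C(s, t) :=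
  ⟨fun x => ⟨f x, h x.2⟩, Continuous.subtype_mk (f.continuous.comp continuous_subtype_val) _⟩



/-! ### The Cayley tree of the free group on two generators -/

/-- The free group on two generators. -/
abbrev Gam : Type := FreeGroup Bool

/-- Dichotomy for right multiplication by a generator. -/
lemma toWord_mul_of (u : Gam) (j : Bool) :
    (u * FreeGroup.of j).toWord = u.toWord ++ [(j, true)] ∨
    u.toWord = (u * FreeGroup.of j).toWord ++ [(j, false)] := by
  rcases List.eq_nil_or_concat u.toWord with h | ⟨L, b, h⟩
  · left
    rw [FreeGroup.toWord_mul, h, FreeGroup.toWord_of]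
    rfl
  · rw [List.concat_eq_append] at h
    have hred : FreeGroup.IsReduced (L ++ [b]) := h ▸ FreeGroup.isReduced_toWord
    by_cases hb : b = (j, false)
    · right
      have hL : FreeGroup.IsReduced L := (List.isChain_append.mp hred).1
      have hu : u * FreeGroup.of j = FreeGroup.mk L := by
        have : u = FreeGroup.mk (L ++ [b]) := by rw [← h, FreeGroup.mk_toWord]
        rw [this, hb, ← FreeGroup.mul_mk, mul_assoc]
        have : (FreeGroup.mk [(j, false)] : Gam) = (FreeGroup.of j)⁻¹ := by
          simp [FreeGroup.of, FreeGroup.inv_mk, FreeGroup.invRev]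
        rw [this]; simp
      rw [hu, FreeGroup.toWord_mk, hL.reduce_eq, h, hb]
    · left
      rw [FreeGroup.toWord_mul, FreeGroup.toWord_of, h]
      apply FreeGroup.IsReduced.reduce_eq
      unfold FreeGroup.IsReduced at hred ⊢
      rw [List.isChain_append] at hred ⊢
      refine ⟨List.isChain_append.mpr hred, List.isChain_singleton _, ?_⟩
      intro x hx y hy
      simp at hx hy
      subst hx; subst hy
      intro h1
      obtain ⟨b1, b2⟩ := b
      simp only at h1 ⊢
      subst h1
      cases b2 <;> simp_all

lemma norm_mul_of (u : Gam) (j : Bool) :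
    (u * FreeGroup.of j).norm = u.norm + 1 ∨ u.norm = (u * FreeGroup.of j).norm + 1 := by
  rcases toWord_mul_of u j with h | h
  · left; simp [FreeGroup.norm, h]
  · right; unfold FreeGroup.norm; rw [h]; simp

lemma exists_near (u : Gam) (hu : u ≠ 1) : ∃ (v : Gam) (j : Bool), u.norm = v.norm + 1 ∧
    (u = v * FreeGroup.of j ∨ v = u * FreeGroup.of j) := by
  rcases List.eq_nil_or_concat u.toWord with h | ⟨L, ⟨j, b⟩, h⟩
  · exact absurd (FreeGroup.toWord_eq_nil_iff.mp h) hu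
  · rw [List.concat_eq_append] at h
    have hue : u = FreeGroup.mk (L ++ [(j, b)]) := by rw [← h, FreeGroup.mk_toWord]
    have hred : FreeGroup.IsReduced (L ++ [(j, b)]) := h ▸ FreeGroup.isReduced_toWord
    have hL : FreeGroup.IsReduced L := (List.isChain_append.mp hred).1
    refine ⟨FreeGroup.mk L, j, ?_, ?_⟩
    · unfold FreeGroup.norm
      rw [h, FreeGroup.toWord_mk, hL.reduce_eq]; simp
    · cases b
      · right
        rw [hue, ← FreeGroup.mul_mk, mul_assoc]
        have : (FreeGroup.mk [(j, false)] : Gam) = (FreeGroup.of j)⁻¹ := by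
          simp [FreeGroup.of, FreeGroup.inv_mk, FreeGroup.invRev]
        rw [this]; simp
      · left
        rw [hue, ← FreeGroup.mul_mk]; rfl

/-- The coordinate of a vertex `w` at the edge `ε = (g, i)` from `g` to `g xᵢ`: it is `1` if `w`
lies on the far side of the edge. -/
noncomputable def vert (w : Gam) (e : Gam × Bool) : ℝ :=
  if (e.1⁻¹ * w).toWord.head? = some (e.2, true) then 1 else 0

lemma vert_self (w : Gam) (i : Bool) : vert w (w, i) = 0 := by simp [vert]

lemma vert_far (w : Gam) (i : Bool) : vert (w * FreeGroup.of i) (w, i) = 1 := by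
  simp [vert]

lemma vert_zero_or_one (w : Gam) (e : Gam × Bool) : vert w e = 0 ∨ vert w e = 1 := by
  unfold vert; split_ifs <;> simp

lemma vert_step (w : Gam) (i : Bool) (e : Gam × Bool) (he : e ≠ (w, i)) :
    vert (w * FreeGroup.of i) e = vert w e := by
  obtain ⟨g, j⟩ := e
  unfold vert
  simp only
  rw [← mul_assoc]
  set u := g⁻¹ * w with hu
  have key : (u * FreeGroup.of i).toWord.head? = some (j, true) ↔
      u.toWord.head? = some (j, true) := by
    rcases toWord_mul_of u i with h | h
    · rw [h]
      rcases hw : u.toWord with _ | ⟨a, L⟩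
      · have hu1 : u = 1 := FreeGroup.toWord_eq_nil_iff.mp hw
        have hg : g = w := by rw [hu, inv_mul_eq_one] at hu1; exact hu1
        subst hg
        simp only [List.nil_append, List.head?_cons, List.head?_nil, Option.some.injEq,
          Prod.mk.injEq, and_true, reduceCtorEq, iff_false]
        intro hij; exact he (by rw [hij])
      · simp
    · rw [h]
      rcases hw : (u * FreeGroup.of i).toWord with _ | ⟨a, L⟩
      · simp
      · simp
  simp only [key]

lemma vert_sep (v w : Gam) (h : v ≠ w) : ∃ i : Bool,
    vert v (w, i) = 1 ∨ vert v (w * (FreeGroup.of i)⁻¹, i) = 0 := by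
  rcases hL : (w⁻¹ * v).toWord with _ | ⟨⟨i, b⟩, L⟩
  · exact absurd (inv_mul_eq_one.mp (FreeGroup.toWord_eq_nil_iff.mp hL)).symm h
  · refine ⟨i, ?_⟩
    cases b
    · right
      have hred : FreeGroup.IsReduced ((i, false) :: L) := hL ▸ FreeGroup.isReduced_toWord
      have hLr : FreeGroup.IsReduced L := List.IsChain.tail hred
      have e1 : (w * (FreeGroup.of i)⁻¹)⁻¹ * v = FreeGroup.mk L := by
        have : w⁻¹ * v = FreeGroup.mk ((i, false) :: L) := by rw [← hL, FreeGroup.mk_toWord]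
        rw [mul_inv_rev, inv_inv, mul_assoc, this]
        have e2 : (FreeGroup.mk ((i, false) :: L) : Gam) =
            (FreeGroup.of i)⁻¹ * FreeGroup.mk L := by
          simp [FreeGroup.of, FreeGroup.inv_mk, FreeGroup.invRev, FreeGroup.mul_mk]
        rw [e2]; simp
      unfold vert
      rw [if_neg]
      simp only [e1, FreeGroup.toWord_mk, hLr.reduce_eq]
      rcases L with _ | ⟨a, L⟩
      · simp
      · intro ha
        simp at ha
        subst ha
        unfold FreeGroup.IsReduced at hred
        simp at hred
    · left
      unfold vert
      rw [if_pos]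
      simp [hL]

lemma vert_back (w : Gam) (i : Bool) : vert w (w * (FreeGroup.of i)⁻¹, i) = 1 := by
  simp [vert]

/-- The point at parameter `h` of the edge from `w` to `w xᵢ`. -/
noncomputable def seg (w : Gam) (i : Bool) (h : ℝ) : Gam × Bool → ℝ :=
  Function.update (vert w) (w, i) h

lemma seg_same (w : Gam) (i : Bool) (h : ℝ) : seg w i h (w, i) = h := by simp [seg]

lemma seg_ne (w : Gam) (i : Bool) (h : ℝ) (e : Gam × Bool) (he : e ≠ (w, i)) :
    seg w i h e = vert w e := by simp [seg, he]

lemma seg_zero (w : Gam) (i : Bool) : seg w i 0 = vert w := by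
  simp [seg, ← vert_self w i]

lemma seg_one (w : Gam) (i : Bool) : seg w i 1 = vert (w * FreeGroup.of i) := by
  funext e
  by_cases he : e = (w, i)
  · subst he; rw [seg_same, vert_far]
  · rw [seg_ne _ _ _ _ he, vert_step _ _ _ he]

/-- The tree. -/
def Tset : Set (Gam × Bool → ℝ) := {x | ∃ w i, ∃ h ∈ Icc (0 : ℝ) 1, x = seg w i h}

/-- The tree as a space. -/
abbrev T : Type := ↥Tset

lemma seg_mem (w : Gam) (i : Bool) {h : ℝ} (hh : h ∈ Icc (0 : ℝ) 1) : seg w i h ∈ Tset :=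
  ⟨w, i, h, hh, rfl⟩

/-- A point of the tree on an edge. -/
noncomputable def segT (w : Gam) (i : Bool) (h : Icc (0 : ℝ) 1) : T := ⟨seg w i h, seg_mem w i h.2⟩

lemma exists_segT (x : T) : ∃ w i h, x = segT w i h := by
  obtain ⟨x, w, i, h, hh, rfl⟩ := x
  exact ⟨w, i, ⟨h, hh⟩, rfl⟩

lemma vert_mem (w : Gam) : vert w ∈ Tset := seg_zero w true ▸ seg_mem w true (by simp)

/-- A vertex of the tree. -/
noncomputable def vertT (w : Gam) : T := ⟨vert w, vert_mem w⟩

lemma T_bounds (x : T) (e : Gam × Bool) : 0 ≤ x.1 e ∧ x.1 e ≤ 1 := by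
  obtain ⟨x, w, i, h, hh, rfl⟩ := x
  by_cases he : e = (w, i)
  · subst he; simp only [seg_same]; exact hh
  · simp only [seg_ne _ _ _ _ he]
    rcases vert_zero_or_one w e with h | h <;> simp [h]

lemma seg_interior {w : Gam} {i : Bool} {h : ℝ} {e : Gam × Bool} (h0 : 0 < seg w i h e)
    (h1 : seg w i h e < 1) : e = (w, i) := by
  by_contra he
  rw [seg_ne _ _ _ _ he] at h0 h1
  rcases vert_zero_or_one w e with h | h <;> rw [h] at h0 h1 <;> linarith

lemma seg_near {v w : Gam} {j : Bool} {h : ℝ}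
    (H : ∀ i, seg v j h (w, i) < 1/2 ∧ 1/2 < seg v j h (w * (FreeGroup.of i)⁻¹, i)) :
    (h < 1/2 ∧ v = w) ∨ (1/2 < h ∧ v * FreeGroup.of j = w) := by
  by_cases hh : h ≤ 1/2
  · left
    have hvw : v = w := by
      by_contra hne
      obtain ⟨i, hi | hi⟩ := vert_sep v w hne
      · have := (H i).1
        rw [seg_ne _ _ _ _ (by simp; intro h; exact absurd h.symm hne), hi] at this
        linarith
      · have := (H i).2
        by_cases he : (w * (FreeGroup.of i)⁻¹, i) = (v, j)
        · rw [he, seg_same] at this; linarith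
        · rw [seg_ne _ _ _ _ he, hi] at this; linarith
    subst hvw
    have := (H j).1
    rw [seg_same] at this
    exact ⟨this, rfl⟩
  · right
    push Not at hh
    refine ⟨hh, ?_⟩
    by_contra hne
    obtain ⟨i, hi | hi⟩ := vert_sep _ w hne
    · have := (H i).1
      by_cases he : (w, i) = (v, j)
      · rw [he, seg_same] at this; linarith
      · rw [seg_ne _ _ _ _ he, ← vert_step _ _ _ he, hi] at this; linarith
    · have := (H i).2
      by_cases he : (w * (FreeGroup.of i)⁻¹, i) = (v, j)
      · simp only [Prod.mk.injEq] at he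
        obtain ⟨h1, h2⟩ := he
        subst h2
        apply hne
        rw [← h1]; simp
      · rw [seg_ne _ _ _ _ he, ← vert_step _ _ _ he, hi] at this; linarith

/-- The open star of radius `1/2` around a vertex. -/
def star (w : Gam) : Set T :=
  {x | ∀ i, x.1 (w, i) < 1/2 ∧ 1/2 < x.1 (w * (FreeGroup.of i)⁻¹, i)}

lemma isOpen_star (w : Gam) : IsOpen (star w) := by
  unfold star
  simp only [ofPred_forall, ofPred_and]
  refine isOpen_iInter_of_finite fun i => IsOpen.inter ?_ ?_
  · exact isOpen_lt ((continuous_apply _).comp continuous_subtype_val) continuous_const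
  · exact isOpen_lt continuous_const ((continuous_apply _).comp continuous_subtype_val)

lemma vert_mem_star (w : Gam) : vertT w ∈ star w := by
  intro i
  simp only [vertT, vert_self, vert_back]
  norm_num

lemma star_unique {w w' : Gam} {x : T} (h : x ∈ star w) (h' : x ∈ star w') : w = w' := by
  obtain ⟨v, j, h0, rfl⟩ := exists_segT x
  rcases seg_near h with ⟨a, rfl⟩ | ⟨a, rfl⟩ <;> rcases seg_near h' with ⟨b, rfl⟩ | ⟨b, rfl⟩
  · rfl
  · linarith
  · linarith
  · rfl

/-! ### The action -/

lemma vert_smul (g w : Gam) (e : Gam × Bool) : vert (g * w) e = vert w (g⁻¹ * e.1, e.2) := by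
  unfold vert
  simp only [mul_inv_rev, inv_inv, mul_assoc]

lemma seg_smul (g w : Gam) (i : Bool) (h : ℝ) (e : Gam × Bool) :
    seg (g * w) i h e = seg w i h (g⁻¹ * e.1, e.2) := by
  by_cases he : e = (g * w, i)
  · subst he
    simp [seg_same]
  · rw [seg_ne _ _ _ _ he, seg_ne, vert_smul]
    intro h'
    apply he
    obtain ⟨e1, e2⟩ := e
    simp only [Prod.mk.injEq] at h' ⊢
    exact ⟨by rw [← h'.1]; simp, h'.2⟩

instance : MulAction Gam T where
  smul g x := ⟨fun e => x.1 (g⁻¹ * e.1, e.2), by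
    obtain ⟨x, w, i, h, hh, rfl⟩ := x
    exact ⟨g * w, i, h, hh, funext fun e => (seg_smul g w i h e).symm⟩⟩
  one_smul x := by
    apply Subtype.ext; funext e
    change x.1 _ = _
    simp
  mul_smul g h x := by
    apply Subtype.ext; funext e
    change x.1 _ = x.1 _
    simp [mul_assoc]

lemma smul_apply (g : Gam) (x : T) (e : Gam × Bool) : (g • x).1 e = x.1 (g⁻¹ * e.1, e.2) := rfl

lemma smul_segT (g w : Gam) (i : Bool) (h : Icc (0 : ℝ) 1) : g • segT w i h = segT (g * w) i h := by
  apply Subtype.ext; funext e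
  rw [smul_apply]
  exact (seg_smul g w i h e).symm

lemma smul_star {g w : Gam} {x : T} (hx : x ∈ star w) : g • x ∈ star (g * w) := by
  intro i
  have := hx i
  simp only [smul_apply]
  simpa [mul_assoc] using this

/-- The quotient graph. -/
abbrev TQ : Type := MulAction.orbitRel.Quotient Gam T

/-- The quotient map of the tree. -/
def tq : T → TQ := Quotient.mk _

lemma tree_disjoint (x : T) :
    ∃ U ∈ nhds x, ∀ g : Gam, ((g • ·) '' U ∩ U).Nonempty → g = 1 := by
  obtain ⟨w, i, ⟨h, hh⟩, rfl⟩ := exists_segT x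
  have hv : ∀ v : Gam, ∃ U ∈ nhds (vertT v), ∀ g : Gam, ((g • ·) '' U ∩ U).Nonempty → g = 1 := by
    intro v
    refine ⟨star v, (isOpen_star v).mem_nhds (vert_mem_star v), ?_⟩
    rintro g ⟨_, ⟨y, hy, rfl⟩, hy'⟩
    have := star_unique (smul_star (g := g) hy) hy'
    simpa using this
  by_cases h0 : h = 0
  · have : segT w i ⟨h, hh⟩ = vertT w := Subtype.ext (by subst h0; exact seg_zero w i)
    rw [this]; exact hv w
  by_cases h1 : h = 1
  · have : segT w i ⟨h, hh⟩ = vertT (w * FreeGroup.of i) :=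
      Subtype.ext (by subst h1; exact seg_one w i)
    rw [this]; exact hv _
  have h0' : 0 < h := lt_of_le_of_ne hh.1 (Ne.symm h0)
  have h1' : h < 1 := lt_of_le_of_ne hh.2 h1
  refine ⟨{x : T | 0 < x.1 (w, i) ∧ x.1 (w, i) < 1}, ?_, ?_⟩
  · apply IsOpen.mem_nhds
    · exact (isOpen_lt continuous_const ((continuous_apply _).comp continuous_subtype_val)).inter
        (isOpen_lt ((continuous_apply _).comp continuous_subtype_val) continuous_const)
    · simp [segT, seg_same, h0', h1']
  · rintro g ⟨_, ⟨y, hy, rfl⟩, hy'⟩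
    obtain ⟨v, j, h2, rfl⟩ := exists_segT y
    have e1 := seg_interior hy.1 hy.2
    have e2 := seg_interior (w := v) (i := j) (h := h2) hy'.1 hy'.2
    simp only at e2
    rw [← e1] at e2
    simp only [Prod.mk.injEq, and_true] at e2
    simpa using e2

lemma tq_covering : IsQuotientCoveringMap tq Gam where
  toIsQuotientMap := isQuotientMap_quotient_mk'
  continuous_const_smul g := by
    refine Continuous.subtype_mk ?_ _
    exact continuous_pi fun e => (continuous_apply _).comp continuous_subtype_val
  apply_eq_iff_mem_orbit {a b} := by
    unfold tq
    rw [Quotient.eq]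
    rfl
  disjoint := tree_disjoint

/-- Maps out of the quotient graph from two loops. -/
lemma exists_graph_map {Z : Type*} [TopologicalSpace Z] (l : Bool → C(ℝ, Z)) (o : Z)
    (h0 : ∀ i, l i 0 = o) (h1 : ∀ i, l i 1 = o) :
    ∃ k : C(TQ, Z), ∀ w i h, k (tq (segT w i h)) = l i h := by
  classical
  choose W I Hh hrep using exists_segT
  let j : T → Z := fun x => l (I x) (Hh x)
  have hj : ∀ w i h, j (segT w i h) = l i h := by
    intro w i h
    have e := hrep (segT w i h)
    set x := segT w i h with hx
    have hval : ∀ {w i} {h : Icc (0 : ℝ) 1}, x = segT w i h → (h : ℝ) = 0 ∨ (h : ℝ) = 1 →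
        (∀ e, x.1 e = 0 ∨ x.1 e = 1) ∧ l i h = o := by
      intro w i h hxe hh
      constructor
      · intro e
        rw [hxe]
        by_cases he : e = (w, i)
        · subst he; simp only [segT, seg_same]; exact hh
        · simp only [segT, seg_ne _ _ _ _ he]; exact vert_zero_or_one _ _
      · rcases hh with hh | hh <;> rw [hh]
        · exact h0 i
        · exact h1 i
    have hval' : ∀ {w i} {h : Icc (0 : ℝ) 1}, x = segT w i h → (∀ e, x.1 e = 0 ∨ x.1 e = 1) →
        l i h = o := by
      intro w i h hxe H
      have := H (w, i)
      rw [hxe] at this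
      simp only [segT, seg_same] at this
      exact (hval hxe this).2
    by_cases H : ∀ e, x.1 e = 0 ∨ x.1 e = 1
    · change l (I x) (Hh x) = _
      rw [hval' e H, hval' hx H]
    · push Not at H
      obtain ⟨ε, H0, H1⟩ := H
      have b := T_bounds x ε
      have b0 : 0 < x.1 ε := lt_of_le_of_ne b.1 (Ne.symm H0)
      have b1 : x.1 ε < 1 := lt_of_le_of_ne b.2 H1
      have E1 : ε = (w, i) := seg_interior (w := w) (i := i) (h := h) b0 b1
      have b0' : 0 < (segT (W x) (I x) (Hh x)).1 ε := e ▸ b0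
      have b1' : (segT (W x) (I x) (Hh x)).1 ε < 1 := e ▸ b1
      have E2 : ε = (W x, I x) := seg_interior b0' b1'
      have v1 : x.1 ε = h := by rw [E1, hx]; simp [segT, seg_same]
      have v2 : x.1 ε = Hh x := by
        conv_lhs => rw [e, E2]
        simp [segT, seg_same]
      have hi : I x = i := by
        rw [E1] at E2; exact (Prod.mk.inj E2).2.symm
      change l (I x) (Hh x) = _
      rw [hi, ← v1, ← v2]
  have hcoord : ∀ e : Gam × Bool, Continuous fun x : T => x.1 e :=
    fun e => (continuous_apply e).comp continuous_subtype_val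
  have hcv : ∀ v : Gam, ContinuousAt j (vertT v) := by
    intro v
    have hjv : j (vertT v) = o := by
      have : vertT v = segT v true ⟨0, by simp⟩ := Subtype.ext (seg_zero v true).symm
      rw [this, hj]; exact h0 _
    unfold ContinuousAt
    rw [hjv]
    intro V hV
    rw [Filter.mem_map]
    have hev : ∀ i, ∀ᶠ x in nhds (vertT v), l i (x.1 (v, i)) ∈ V ∧
        l i (x.1 (v * (FreeGroup.of i)⁻¹, i)) ∈ V := by
      intro i
      refine Filter.Eventually.and ?_ ?_
      · have : ContinuousAt (fun x : T => l i (x.1 (v, i))) (vertT v) :=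
          ((l i).continuous.comp (hcoord _)).continuousAt
        apply this
        simp only [vertT, vert_self, h0]; exact hV
      · have : ContinuousAt (fun x : T => l i (x.1 (v * (FreeGroup.of i)⁻¹, i))) (vertT v) :=
          ((l i).continuous.comp (hcoord _)).continuousAt
        apply this
        simp only [vertT, vert_back, h1]; exact hV
    filter_upwards [Filter.eventually_all.mpr hev, (isOpen_star v).mem_nhds (vert_mem_star v)]
      with x hx hs
    obtain ⟨u, i, h, rfl⟩ := exists_segT x
    rw [mem_preimage]
    rw [hj]
    rcases seg_near hs with ⟨a, rfl⟩ | ⟨a, rfl⟩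
    · have := (hx i).1
      simpa [segT, seg_same] using this
    · have := (hx i).2
      simpa [segT, seg_same] using this
  have hjc : Continuous j := by
    rw [continuous_iff_continuousAt]
    intro x
    obtain ⟨w, i, ⟨h, hh⟩, rfl⟩ := exists_segT x
    by_cases h0' : h = 0
    · have : segT w i ⟨h, hh⟩ = vertT w := Subtype.ext (by subst h0'; exact seg_zero w i)
      rw [this]; exact hcv w
    by_cases h1' : h = 1
    · have : segT w i ⟨h, hh⟩ = vertT (w * FreeGroup.of i) :=
        Subtype.ext (by subst h1'; exact seg_one w i)
      rw [this]; exact hcv _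
    have p0 : 0 < h := lt_of_le_of_ne hh.1 (Ne.symm h0')
    have p1 : h < 1 := lt_of_le_of_ne hh.2 h1'
    have hcont : ContinuousAt (fun x : T => l i (x.1 (w, i))) (segT w i ⟨h, hh⟩) :=
      ((l i).continuous.comp (hcoord _)).continuousAt
    refine hcont.congr ?_
    have hU : {x : T | 0 < x.1 (w, i) ∧ x.1 (w, i) < 1} ∈ nhds (segT w i ⟨h, hh⟩) := by
      apply IsOpen.mem_nhds
      · exact (isOpen_lt continuous_const (hcoord _)).inter (isOpen_lt (hcoord _) continuous_const)
      · simp [segT, seg_same, p0, p1]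
    filter_upwards [hU] with y hy
    obtain ⟨v, i', h', rfl⟩ := exists_segT y
    have := seg_interior hy.1 hy.2
    simp only [Prod.mk.injEq] at this
    obtain ⟨rfl, rfl⟩ := this
    rw [hj]; simp [segT, seg_same]
  have hinv : ∀ a b : T, (MulAction.orbitRel Gam T) a b → j a = j b := by
    rintro a b ⟨g, rfl⟩
    obtain ⟨v, i', h', rfl⟩ := exists_segT b
    simp only [smul_segT, hj]
  exact ⟨⟨Quotient.lift j hinv, hjc.quotient_lift hinv⟩, fun w i h => hj w i h⟩


/-! ### Contracting the tree -/

/-- Depth of an edge. -/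
def depth (e : Gam × Bool) : ℕ := min e.1.norm (e.1 * FreeGroup.of e.2).norm

lemma vert_depth (n : ℕ) : ∀ (u : Gam) (e : Gam × Bool), u.norm = n → vert u e ≠ vert 1 e →
    depth e < u.norm := by
  induction n with
  | zero =>
    intro u e hu hne
    rw [FreeGroup.norm_eq_zero] at hu
    subst hu; exact absurd rfl hne
  | succ n ih =>
    intro u e hu hne
    have hu1 : u ≠ 1 := by rintro rfl; simp at hu
    obtain ⟨v, j, hn, h | h⟩ := exists_near u hu1
    · by_cases he : e = (v, j)
      · subst he
        simp only [depth, ← h]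
        omega
      · have e1 : vert u e = vert v e := by rw [h]; exact vert_step _ _ _ he
        have := ih v e (by omega) (e1 ▸ hne)
        omega
    · by_cases he : e = (u, j)
      · subst he
        simp only [depth, ← h]
        omega
      · have e1 : vert v e = vert u e := by rw [h]; exact vert_step _ _ _ he
        have := ih v e (by omega) (e1 ▸ hne)
        omega

/-- Allowed deviation at depth `n` and time `s`. -/
noncomputable def cdev (n : ℕ) (s : ℝ) : ℝ := max 0 (min 1 ((s * (n + 1) - n) * (n + 2)))

lemma cdev_nonneg (n : ℕ) (s : ℝ) : 0 ≤ cdev n s := le_max_left _ _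

lemma cdev_zero (n : ℕ) : cdev n 0 = 0 := by
  unfold cdev
  apply max_eq_left
  apply min_le_of_right_le
  have : (0 : ℝ) ≤ n := Nat.cast_nonneg n
  nlinarith

lemma cdev_one (n : ℕ) : cdev n 1 = 1 := by
  unfold cdev
  have : (0 : ℝ) ≤ n := Nat.cast_nonneg n
  rw [min_eq_left (by nlinarith)]
  simp

lemma cdev_lt {m n : ℕ} {s : ℝ} (hmn : m < n) (h : cdev n s ≠ 0) : cdev m s = 1 := by
  have hn : (0 : ℝ) ≤ n := Nat.cast_nonneg n
  have hm : (0 : ℝ) ≤ m := Nat.cast_nonneg m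
  have hmn' : (m : ℝ) + 1 ≤ n := by exact_mod_cast hmn
  have hpos : 0 < (s * (n + 1) - n) * (n + 2) := by
    by_contra hle
    push Not at hle
    exact h (max_eq_left (min_le_of_right_le hle))
  have h1 : 0 < s * (n + 1) - n := pos_of_mul_pos_left hpos (by linarith)
  have h2 : (m : ℝ) + 1 ≤ s * (m + 2) := by
    by_contra hlt
    push Not at hlt
    have : s * (n + 1) * (m + 2) < (m + 1) * (n + 1) := by nlinarith
    nlinarith
  unfold cdev
  rw [min_eq_left (by nlinarith)]
  simp

/-- The contraction, on all functions. -/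
noncomputable def tr (s : ℝ) (x : Gam × Bool → ℝ) (e : Gam × Bool) : ℝ :=
  max (vert 1 e - cdev (depth e) s) (min (vert 1 e + cdev (depth e) s) (x e))

lemma tr_of_cdev_zero {s : ℝ} {x : Gam × Bool → ℝ} {e : Gam × Bool} (h : cdev (depth e) s = 0) :
    tr s x e = vert 1 e := by
  unfold tr; rw [h]; simp

lemma tr_of_eq {s : ℝ} {x : Gam × Bool → ℝ} {e : Gam × Bool} (h : x e = vert 1 e) :
    tr s x e = vert 1 e := by
  unfold tr; rw [h]
  have := cdev_nonneg (depth e) s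
  rw [min_eq_right (by linarith), max_eq_right (by linarith)]

lemma tr_of_one {s : ℝ} {x : Gam × Bool → ℝ} {e : Gam × Bool} (h : cdev (depth e) s = 1)
    (h0 : 0 ≤ x e) (h1 : x e ≤ 1) : tr s x e = x e := by
  unfold tr; rw [h]
  rcases vert_zero_or_one 1 e with h | h <;> rw [h] <;>
  rw [min_eq_right (by linarith), max_eq_right (by linarith)]

lemma exists_nearEnd (w : Gam) (i : Bool) : ∃ u : Gam, u.norm = depth (w, i) ∧
    ∀ e, e ≠ (w, i) → vert w e = vert u e := by
  rcases le_total w.norm (w * FreeGroup.of i).norm with h | h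
  · exact ⟨w, by simp [depth, h], fun _ _ => rfl⟩
  · exact ⟨w * FreeGroup.of i, by simp [depth, h], fun e he => (vert_step _ _ _ he).symm⟩

lemma tr_mem (s : ℝ) (n : ℕ) : ∀ (w : Gam) (i : Bool) (h : ℝ), h ∈ Icc (0 : ℝ) 1 →
    depth (w, i) = n → tr s (seg w i h) ∈ Tset := by
  induction n with
  | zero =>
    intro w i h hh hd
    obtain ⟨u, hu, hue⟩ := exists_nearEnd w i
    rw [hd, FreeGroup.norm_eq_zero] at hu
    subst hu
    refine ⟨w, i, tr s (seg w i h) (w, i), ?_, ?_⟩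
    · unfold tr
      rw [seg_same]
      have := cdev_nonneg (depth (w, i)) s
      rcases vert_zero_or_one 1 (w, i) with h' | h' <;> rw [h'] <;>
        refine ⟨le_max_of_le_right (le_min (by linarith) hh.1),
          max_le (by linarith) (min_le_of_right_le hh.2)⟩
    · funext e
      by_cases he : e = (w, i)
      · subst he; rw [seg_same]
      · rw [seg_ne _ _ _ _ he, hue e he]
        apply tr_of_eq
        rw [seg_ne _ _ _ _ he, hue e he]
  | succ n ih =>
    intro w i h hh hd
    obtain ⟨u, hu, hue⟩ := exists_nearEnd w i
    rw [hd] at hu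
    by_cases hc : cdev (n + 1) s = 0
    · have e1 : tr s (seg w i h) = tr s (vert u) := by
        funext e
        by_cases he : e = (w, i)
        · subst he
          rw [tr_of_cdev_zero (by rw [hd, hc]), tr_of_cdev_zero (by rw [hd, hc])]
        · unfold tr
          rw [seg_ne _ _ _ _ he, hue e he]
      rw [e1]
      have hu1 : u ≠ 1 := by rintro rfl; simp at hu
      obtain ⟨v, j, hn, h | h⟩ := exists_near u hu1
      · have : vert u = seg v j 1 := by rw [seg_one, h]
        rw [this]
        apply ih _ _ _ (by simp)
        simp only [depth, ← h]; omega
      · have : vert u = seg u j 0 := by rw [seg_zero]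
        rw [this]
        apply ih _ _ _ (by simp)
        simp only [depth, ← h]; omega
    · refine ⟨w, i, tr s (seg w i h) (w, i), ?_, ?_⟩
      · unfold tr
        rw [seg_same]
        have := cdev_nonneg (depth (w, i)) s
        rcases vert_zero_or_one 1 (w, i) with h' | h' <;> rw [h'] <;>
          refine ⟨le_max_of_le_right (le_min (by linarith) hh.1),
            max_le (by linarith) (min_le_of_right_le hh.2)⟩
      · funext e
        by_cases he : e = (w, i)
        · subst he; rw [seg_same]
        · rw [seg_ne _ _ _ _ he]
          have hx : seg w i h e = vert u e := by rw [seg_ne _ _ _ _ he, hue e he]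
          rw [hue e he]
          by_cases hv : vert u e = vert 1 e
          · rw [hv]; exact tr_of_eq (hx.trans hv)
          · have := vert_depth _ u e rfl hv
            rw [hu] at this
            rw [tr_of_one (cdev_lt this hc), hx]
            · rw [hx]; rcases vert_zero_or_one u e with h | h <;> rw [h] <;> norm_num
            · rw [hx]; rcases vert_zero_or_one u e with h | h <;> rw [h] <;> norm_num

/-- The contraction of the tree. -/
lemma tree_contraction : ∃ R : C(ℝ × T, T), (∀ x, R (1, x) = x) ∧ ∀ x, R (0, x) = vertT 1 := by
  have hm : ∀ p : ℝ × T, tr p.1 p.2.1 ∈ Tset := by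
    rintro ⟨s, x⟩
    obtain ⟨w, i, h, rfl⟩ := exists_segT x
    exact tr_mem s _ w i h h.2 rfl
  refine ⟨⟨fun p => ⟨tr p.1 p.2.1, hm p⟩, ?_⟩, ?_, ?_⟩
  · refine Continuous.subtype_mk ?_ _
    refine continuous_pi fun e => ?_
    have h2 : Continuous fun p : ℝ × T => p.2.1 e :=
      (continuous_apply e).comp (continuous_subtype_val.comp continuous_snd)
    unfold tr cdev
    fun_prop
  · intro x
    apply Subtype.ext
    funext e
    exact tr_of_one (cdev_one _) (T_bounds x e).1 (T_bounds x e).2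
  · intro x
    apply Subtype.ext
    funext e
    exact tr_of_cdev_zero (cdev_zero _)


/-! ### The topology of the punctured Möbius band -/

lemma rel_equiv : Equivalence rel where
  refl p := Or.inl rfl
  symm {p q} h := by
    rcases h with h | ⟨h1, h2, h3⟩ | ⟨h1, h2, h3⟩
    · exact Or.inl h.symm
    · exact Or.inr (Or.inr ⟨h2, h1, h3⟩)
    · exact Or.inr (Or.inl ⟨h2, h1, h3⟩)
  trans {p q r} h h' := by
    rcases h with h | ⟨h1, h2, h3⟩ | ⟨h1, h2, h3⟩
    · have : p = q := Subtype.ext h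
      subst this; exact h'
    · rcases h' with h | ⟨h1', h2', h3'⟩ | ⟨h1', h2', h3'⟩
      · have : q = r := Subtype.ext h
        subst this; exact Or.inr (Or.inl ⟨h1, h2, h3⟩)
      · rw [h2] at h1'; norm_num at h1'
      · exact Or.inl (Prod.ext (by rw [h1, h2']) (by rw [h3, h3']))
    · rcases h' with h | ⟨h1', h2', h3'⟩ | ⟨h1', h2', h3'⟩
      · have : q = r := Subtype.ext h
        subst this; exact Or.inr (Or.inr ⟨h1, h2, h3⟩)
      · exact Or.inl (Prod.ext (by rw [h1, h2']) (by linarith))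
      · rw [h2] at h1'; norm_num at h1'

lemma qm_eq_iff (p q : Sq) : qm p = qm q ↔ rel p q := rel_equiv.quot_mk_eq_iff p q

lemma qm_continuous : Continuous qm := continuous_quot_mk

instance : T2Space M := by
  let ψ : Sq → ℝ × ℝ × ℝ × ℝ := fun p =>
    (p.1.1 * (1 - p.1.1), (p.1.1 - 1/2) * (p.1.1 * (1 - p.1.1)), p.1.2 * (p.1.1 * (1 - p.1.1)),
      p.1.2 * (1 - 2 * p.1.1))
  have hψ : Continuous ψ := by fun_prop
  have hrel : ∀ p q : Sq, rel p q → ψ p = ψ q := by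
    rintro p q (h | ⟨h1, h2, h3⟩ | ⟨h1, h2, h3⟩)
    · simp only [ψ, h]
    · simp only [ψ, h1, h2, h3]; norm_num
    · simp only [ψ, h1, h2, h3]; norm_num
  have hc : Continuous (Quot.lift ψ hrel : M → ℝ × ℝ × ℝ × ℝ) := continuous_quot_lift hrel hψ
  refine T2Space.of_injective_continuous (f := (Quot.lift ψ hrel : M → ℝ × ℝ × ℝ × ℝ)) ?_ hc
  rintro ⟨p⟩ ⟨q⟩ h
  change ψ p = ψ q at h
  change qm p = qm q
  rw [qm_eq_iff]
  obtain ⟨⟨x, y⟩, ⟨hx, hy⟩⟩ := p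
  obtain ⟨⟨x', y'⟩, ⟨hx', hy'⟩⟩ := q
  simp only [ψ, Prod.mk.injEq] at h hx hx'
  obtain ⟨h1, h2, h3, h4⟩ := h
  unfold rel
  simp only
  by_cases hA : x * (1 - x) = 0
  · have hA' : x' * (1 - x') = 0 := h1 ▸ hA
    rcases mul_eq_zero.mp hA with hx0 | hx1 <;> rcases mul_eq_zero.mp hA' with hx0' | hx1'
    · left; subst hx0; subst hx0'; simp at h4; rw [h4]
    · right; left
      have : x' = 1 := by linarith
      subst hx0; subst this
      refine ⟨rfl, rfl, by linarith⟩
    · right; right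
      have : x = 1 := by linarith
      subst hx0'; subst this
      refine ⟨rfl, rfl, by linarith⟩
    · left
      have e1 : x = 1 := by linarith
      have e2 : x' = 1 := by linarith
      subst e1; subst e2
      simp only [Prod.mk.injEq, true_and]; linarith
  · left
    rw [← h1] at h2 h3
    have e1 := mul_right_cancel₀ hA h2
    have e2 := mul_right_cancel₀ hA h3
    rw [Prod.mk.injEq]
    exact ⟨by linarith, e2⟩

/-- The radial coordinate in the plane. -/
noncomputable def rad (p : ℝ × ℝ) : ℝ := max |p.1 - 1/2| |p.2|

lemma rad_continuous : Continuous rad := by unfold rad; fun_prop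

lemma rad_eq_dist (p : ℝ × ℝ) : rad p = dist p (1/2, 0) := by
  simp [rad, Prod.dist_eq, Real.dist_eq]

lemma rad_le_one {p : ℝ × ℝ} (hp : p ∈ Sq) : rad p ≤ 1 := by
  obtain ⟨h1, h2⟩ := hp
  exact max_le (abs_le.mpr ⟨by linarith [h1.1], by linarith [h1.2]⟩) (abs_le.mpr ⟨h2.1, h2.2⟩)

/-- The punctured square. -/
def SqX : Set (ℝ × ℝ) := {p | p ∈ Sq ∧ 1/4 ≤ rad p}

lemma mem_Bdisc (p : ℝ × ℝ) : p ∈ Bdisc ↔ rad p < 1/4 := by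
  rw [rad_eq_dist]; rfl

lemma mem_Scirc (p : ℝ × ℝ) : p ∈ Scirc ↔ rad p = 1/4 := by
  rw [rad_eq_dist]; rfl

lemma rad_rel {p q : Sq} (h : rel p q) : rad p = rad q := by
  rcases h with h | ⟨h1, h2, h3⟩ | ⟨h1, h2, h3⟩
  · rw [h]
  · unfold rad; rw [h1, h2, h3, abs_neg]; norm_num
  · unfold rad; rw [h1, h2, h3, abs_neg]; norm_num

lemma qm_mem_Xset (p : Sq) : qm p ∈ Xset ↔ 1/4 ≤ rad p := by
  unfold Xset
  constructor
  · intro h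
    by_contra hlt
    push Not at hlt
    exact h ⟨p, (mem_Bdisc _).mpr hlt, rfl⟩
  · rintro h ⟨q, hq, he⟩
    have h1 : rad q < 1/4 := (mem_Bdisc _).mp hq
    rw [rad_rel ((qm_eq_iff _ _).mp he)] at h1
    linarith

/-- The quotient map onto the punctured Möbius band. -/
def qX (p : SqX) : X := ⟨qm ⟨p.1, p.2.1⟩, (qm_mem_Xset _).mpr p.2.2⟩

lemma qX_continuous : Continuous qX := by
  refine Continuous.subtype_mk ?_ _
  exact qm_continuous.comp (Continuous.subtype_mk continuous_subtype_val _)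

lemma qX_surjective : Function.Surjective qX := by
  rintro ⟨⟨p⟩, hp⟩
  exact ⟨⟨p.1, p.2, (qm_mem_Xset p).mp hp⟩, rfl⟩

lemma qX_eq_iff (p q : SqX) : qX p = qX q ↔ (p.1 = q.1 ∨
    (p.1.1 = 0 ∧ q.1.1 = 1 ∧ p.1.2 = -q.1.2) ∨ (p.1.1 = 1 ∧ q.1.1 = 0 ∧ q.1.2 = -p.1.2)) := by
  unfold qX
  rw [Subtype.mk.injEq, qm_eq_iff]
  rfl

instance : CompactSpace SqX := by
  rw [← isCompact_iff_compactSpace]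
  have h : IsCompact Sq := isCompact_Icc.prod isCompact_Icc
  exact h.inter_right (isClosed_le continuous_const rad_continuous)

lemma descend {Y Z : Type*} [TopologicalSpace Y] [TopologicalSpace Z] (K : SqX × Y → Z)
    (hK : Continuous K)
    (h : ∀ (p q : SqX) (y : Y), p.1.1 = 0 → q.1.1 = 1 → p.1.2 = -q.1.2 → K (p, y) = K (q, y)) :
    ∃ k : C(X × Y, Z), ∀ p y, k (qX p, y) = K (p, y) := by
  have hp : IsProperMap qX := qX_continuous.isProperMap
  have hp' : IsProperMap (Prod.map qX (id : Y → Y)) :=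
    hp.prodMap (Homeomorph.refl Y).isProperMap
  have hq : Topology.IsQuotientMap (Prod.map qX (id : Y → Y)) :=
    hp'.isClosedMap.isQuotientMap hp'.continuous
      (qX_surjective.prodMap Function.surjective_id)
  have key : ∀ p q y, qX p = qX q → K (p, y) = K (q, y) := by
    intro p q y he
    rcases (qX_eq_iff p q).mp he with e | ⟨h1, h2, h3⟩ | ⟨h1, h2, h3⟩
    · rw [Subtype.ext e]
    · exact h p q y h1 h2 h3
    · exact (h q p y h2 h1 h3).symm
  let k : X × Y → Z := fun z => K (Function.surjInv qX_surjective z.1, z.2)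
  have hk : ∀ p y, k (qX p, y) = K (p, y) := fun p y =>
    key _ _ _ (Function.surjInv_eq qX_surjective _)
  refine ⟨⟨k, hq.continuous_iff.mpr ?_⟩, hk⟩
  have : k ∘ Prod.map qX id = K := by
    funext ⟨p, y⟩; exact hk p y
  rw [this]; exact hK

lemma descend_one {Z : Type*} [TopologicalSpace Z] (K : SqX → Z) (hK : Continuous K)
    (h : ∀ (p q : SqX), p.1.1 = 0 → q.1.1 = 1 → p.1.2 = -q.1.2 → K p = K q) :
    ∃ k : C(X, Z), ∀ p, k (qX p) = K p := by
  obtain ⟨k, hk⟩ := descend (Y := Unit) (fun z => K z.1) (hK.comp continuous_fst)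
    (fun p q _ => h p q)
  exact ⟨⟨fun x => k (x, ()), k.continuous.comp (by fun_prop)⟩, fun p => hk p ()⟩

lemma exists_rho : ∃ k : C(X, ℝ), ∀ p, k (qX p) = rad p := by
  refine descend_one (fun p => rad p) (rad_continuous.comp continuous_subtype_val) ?_
  intro p q h1 h2 h3
  unfold rad; rw [h1, h2, h3, abs_neg]; norm_num

/-- The radial coordinate. -/
noncomputable def rho : C(X, ℝ) := exists_rho.choose

lemma rho_qX (p : SqX) : rho (qX p) = rad p := exists_rho.choose_spec p

lemma rho_ge (x : X) : 1/4 ≤ rho x := by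
  obtain ⟨p, rfl⟩ := qX_surjective x
  rw [rho_qX]; exact p.2.2

lemma rho_le (x : X) : rho x ≤ 1 := by
  obtain ⟨p, rfl⟩ := qX_surjective x
  rw [rho_qX]; exact rad_le_one p.2.1

lemma mem_C2 (x : X) : x ∈ C2 ↔ rho x = 1/4 := by
  obtain ⟨p, rfl⟩ := qX_surjective x
  rw [rho_qX]
  constructor
  · rintro ⟨q, hq, hs⟩
    rw [mem_Scirc] at hs
    rw [← hs, rad_rel ((qm_eq_iff _ _).mp hq)]
  · intro h
    exact ⟨⟨p.1, p.2.1⟩, rfl, (mem_Scirc _).mpr h⟩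

lemma rad_eq_one {p : ℝ × ℝ} (hp : p ∈ Sq) : rad p = 1 ↔ (p.2 = 1 ∨ p.2 = -1) := by
  have hx : |p.1 - 1/2| ≤ 1/2 := abs_le.mpr ⟨by linarith [hp.1.1], by linarith [hp.1.2]⟩
  unfold rad
  constructor
  · intro h
    rcases max_choice |p.1 - 1/2| |p.2| with h' | h' <;> rw [h'] at h
    · linarith
    · exact eq_or_eq_neg_of_abs_eq h
  · intro h
    have : |p.2| = 1 := by rcases h with h | h <;> rw [h] <;> simp
    rw [this]; apply max_eq_right; linarith

lemma mem_C1 (x : X) : x ∈ C1 ↔ rho x = 1 := by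
  obtain ⟨p, rfl⟩ := qX_surjective x
  rw [rho_qX]
  constructor
  · rintro ⟨q, hq, hs⟩
    rw [← rad_eq_one q.2] at hs
    rw [← hs, rad_rel ((qm_eq_iff _ _).mp hq)]
  · intro h
    exact ⟨⟨p.1, p.2.1⟩, rfl, (rad_eq_one p.2.1).mp h⟩

lemma mem_Bd (x : X) : x ∈ Bd ↔ rho x = 1 ∨ rho x = 1/4 := by
  unfold Bd; rw [mem_union, mem_C1, mem_C2]

/-- Moving points radially. -/
lemma radial {Y : Type*} [TopologicalSpace Y] (ψ : X × Y → ℝ) (hψ : Continuous ψ)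
    (h1 : ∀ z, 1/4 ≤ ψ z) (h2 : ∀ z, ψ z ≤ 1)
    (h3 : ∀ z : X × Y, rho z.1 ≤ 1/2 → ψ z ≤ 1/2) (h4 : ∀ z : X × Y, 1/2 ≤ rho z.1 → 1/2 ≤ ψ z) :
    ∃ S : C(X × Y, X), (∀ z, rho (S z) = ψ z) ∧ ∀ z : X × Y, ψ z = rho z.1 → S z = z.1 := by
  let ψ' : SqX × Y → ℝ := fun z => ψ (qX z.1, z.2)
  have hψ' : Continuous ψ' := hψ.comp ((qX_continuous.comp continuous_fst).prodMk continuous_snd)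
  let lam : SqX × Y → ℝ := fun z => ψ' z / rad z.1
  let mu : SqX × Y → ℝ := fun z => min (ψ' z) (1/2) / min (rad z.1) (1/2)
  have hr : Continuous fun z : SqX × Y => rad z.1 :=
    rad_continuous.comp (continuous_subtype_val.comp continuous_fst)
  have hr0 : ∀ p : SqX, 0 < rad p := fun p => by have := p.2.2; linarith
  have hlam : Continuous lam := hψ'.div hr fun z => (hr0 z.1).ne'
  have hmu : Continuous mu := (hψ'.min continuous_const).div (hr.min continuous_const)
    fun z => (lt_min (hr0 z.1) (by norm_num)).ne'
  let P : SqX × Y → ℝ × ℝ := fun z => (1/2 + mu z * (z.1.1.1 - 1/2), lam z * z.1.1.2)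
  have hPc : Continuous P := by
    have a1 : Continuous fun z : SqX × Y => z.1.1.1 :=
      continuous_fst.comp (continuous_subtype_val.comp continuous_fst)
    have a2 : Continuous fun z : SqX × Y => z.1.1.2 :=
      continuous_snd.comp (continuous_subtype_val.comp continuous_fst)
    exact (continuous_const.add (hmu.mul (a1.sub continuous_const))).prodMk (hlam.mul a2)
  have hPall : ∀ z, |(P z).1 - 1/2| ≤ 1/2 ∧ rad (P z) = ψ' z := by
    rintro ⟨⟨⟨x, y⟩, ⟨⟨hx, hy⟩, hrad⟩⟩, t⟩
    set p : SqX := ⟨(x, y), ⟨⟨hx, hy⟩, hrad⟩⟩ with hp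
    have q1 : 1/4 ≤ ψ' (p, t) := h1 _
    have q3 : rad (x, y) ≤ 1/2 → ψ' (p, t) ≤ 1/2 := fun h => h3 (qX p, t) (by rw [rho_qX]; exact h)
    have q4 : 1/2 ≤ rad (x, y) → 1/2 ≤ ψ' (p, t) := fun h => h4 (qX p, t) (by rw [rho_qX]; exact h)
    have hx' : |x - 1/2| ≤ 1/2 := by
      have := hx; simp only [mem_Icc] at this
      exact abs_le.mpr ⟨by linarith, by linarith⟩
    have e1 : (P (p, t)).1 - 1/2 = mu (p, t) * (x - 1/2) := by simp [P, hp]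
    have e2 : (P (p, t)).2 = lam (p, t) * y := rfl
    have el : lam (p, t) = ψ' (p, t) / rad (x, y) := rfl
    have em : mu (p, t) = min (ψ' (p, t)) (1/2) / min (rad (x, y)) (1/2) := rfl
    have hrad' : (1:ℝ)/4 ≤ rad (x, y) := hrad
    have hlpos : 0 ≤ lam (p, t) := by rw [el]; positivity
    have hmpos : 0 ≤ mu (p, t) := by
      rw [em]; exact div_nonneg (le_min (by linarith) (by norm_num)) (le_min (by linarith) (by norm_num))
    have hradeq : rad (x, y) = max |x - 1/2| |y| := rfl
    have hrP : rad (P (p, t)) = max (mu (p, t) * |x - 1/2|) (lam (p, t) * |y|) := by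
      unfold rad
      rw [e1, e2, abs_mul, abs_mul, abs_of_nonneg hlpos, abs_of_nonneg hmpos]
    rw [hrP, e1, abs_mul, abs_of_nonneg hmpos]
    set r := rad (x, y) with hrdef
    set s := ψ' (p, t)
    have rpos : 0 < r := by linarith
    rcases le_total r (1/2) with hle | hle
    · have hs := q3 hle
      have hml : mu (p, t) = lam (p, t) := by rw [em, el, min_eq_left hs, min_eq_left hle]
      rw [hml, ← mul_max_of_nonneg _ _ hlpos, ← hradeq, el, div_mul_cancel₀ _ rpos.ne']
      refine ⟨?_, rfl⟩
      have : |x - 1/2| ≤ r := by rw [hradeq]; exact le_max_left _ _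
      calc s / r * |x - 1/2| ≤ s / r * r := by
            apply mul_le_mul_of_nonneg_left this; positivity
        _ = s := div_mul_cancel₀ _ rpos.ne'
        _ ≤ 1/2 := hs
    · have hs := q4 hle
      have hm1 : mu (p, t) = 1 := by rw [em, min_eq_right hs, min_eq_right hle]; norm_num
      rw [hm1, one_mul]
      refine ⟨hx', ?_⟩
      rcases hle.lt_or_eq with hlt | heq
      · have hyr : |y| = r := by
          rcases max_choice |x - 1/2| |y| with h | h
          · rw [← hradeq] at h
            linarith
          · rw [← hradeq] at h; exact h.symm
        rw [hyr, el, div_mul_cancel₀ _ rpos.ne']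
        apply max_eq_right; linarith
      · have hs' := q3 heq.ge
        have : s = 1/2 := le_antisymm hs' hs
        have hl1 : lam (p, t) = 1 := by rw [el, this, ← heq]; norm_num
        rw [hl1, one_mul, ← hradeq, this, heq]
  have hPmem : ∀ z, P z ∈ SqX := by
    intro z
    obtain ⟨a, b⟩ := hPall z
    have c1 := h1 (qX z.1, z.2)
    have c2 := h2 (qX z.1, z.2)
    have d : |(P z).2| ≤ 1 := (le_max_right _ _).trans (b.trans_le c2)
    rw [abs_le] at a d
    exact ⟨⟨⟨by linarith, by linarith⟩, d⟩, by rw [b]; exact c1⟩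
  obtain ⟨S, hS⟩ := descend (fun z => qX ⟨P z, hPmem z⟩)
    (qX_continuous.comp (Continuous.subtype_mk hPc _)) (by
      intro p q y e1 e2 e3
      have hqq : qX p = qX q := (qX_eq_iff _ _).mpr (Or.inr (Or.inl ⟨e1, e2, e3⟩))
      have er : rad p = rad q := by rw [← rho_qX, ← rho_qX, hqq]
      have eψ : ψ' (p, y) = ψ' (q, y) := by simp only [ψ', hqq]
      have el : lam (p, y) = lam (q, y) := by simp only [lam, eψ, er]
      have em : mu (p, y) = mu (q, y) := by simp only [mu, eψ, er]
      have hr2 : 1/2 ≤ rad q := by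
        unfold rad; rw [e2]; norm_num
      have m1 : mu (q, y) = 1 := by
        have := h4 (qX q, y) (by rw [rho_qX]; exact hr2)
        simp only [mu]
        rw [min_eq_right hr2, min_eq_right this]; norm_num
      rw [qX_eq_iff]
      right; left
      refine ⟨?_, ?_, ?_⟩
      · simp only [P]; rw [em, m1, e1]; norm_num
      · simp only [P]; rw [m1, e2]; norm_num
      · simp only [P]; rw [el, e3]; ring)
  refine ⟨S, ?_, ?_⟩
  · rintro ⟨x, y⟩
    obtain ⟨p, rfl⟩ := qX_surjective x
    rw [hS, rho_qX]; exact (hPall _).2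
  · rintro ⟨x, y⟩ hxy
    obtain ⟨p, rfl⟩ := qX_surjective x
    rw [hS]
    simp only [rho_qX] at hxy
    have el : lam (p, y) = 1 := by simp only [lam, ψ', hxy]; exact div_self (hr0 p).ne'
    have em : mu (p, y) = 1 := by
      simp only [mu, ψ', hxy]; exact div_self (lt_min (hr0 p) (by norm_num)).ne'
    congr 1
    apply Subtype.ext
    simp only [P, el, em]
    ext <;> simp


/-! ### Boundary homotopies -/

lemma bh_of {f g : C(X, X)} (F : C(X × unitInterval, X)) (h0 : ∀ x, F (x, 0) = f x)
    (h1 : ∀ x, F (x, 1) = g x) (hb : ∀ x ∈ Bd, ∀ s, F (x, s) ∈ Bd) : BoundaryHomotopic f g :=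
  ⟨{ toFun := fun z => F (z.2, z.1)
     continuous_toFun := F.continuous.comp continuous_swap
     map_zero_left := h0
     map_one_left := h1 }, fun x hx t => hb x hx t⟩

lemma bh_trans {f g h : C(X, X)} (h1 : BoundaryHomotopic f g) (h2 : BoundaryHomotopic g h) :
    BoundaryHomotopic f h := by
  obtain ⟨H, hH⟩ := h1
  obtain ⟨K, hK⟩ := h2
  refine ⟨H.trans K, fun x hx t => ?_⟩
  rw [ContinuousMap.Homotopy.trans_apply]
  split_ifs
  · exact hH x hx _
  · exact hK x hx _

lemma continuous_of_three {A B : Type*} [TopologicalSpace A] [TopologicalSpace B] {F : A → B}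
    {v : A → ℝ} (hv : Continuous v) {a b : ℝ} (h1 : ContinuousOn F {z | v z ≤ a})
    (h2 : ContinuousOn F {z | a ≤ v z ∧ v z ≤ b}) (h3 : ContinuousOn F {z | b ≤ v z}) :
    Continuous F := by
  have c1 : IsClosed {z | v z ≤ a} := isClosed_le hv continuous_const
  have c2 : IsClosed {z | a ≤ v z ∧ v z ≤ b} :=
    (isClosed_le continuous_const hv).inter (isClosed_le hv continuous_const)
  have c3 : IsClosed {z | b ≤ v z} := isClosed_le continuous_const hv
  have := (h1.union_of_isClosed h2 c1 c2).union_of_isClosed h3 (c1.union c2) c3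
  rw [← continuousOn_univ]
  refine this.mono fun z _ => ?_
  rcases le_total (v z) a with h | h
  · exact Or.inl (Or.inl h)
  · rcases le_total (v z) b with h' | h'
    · exact Or.inl (Or.inr ⟨h, h'⟩)
    · exact Or.inr h'

/-- Step one: deform to a map that is constant near each boundary circle. -/
lemma hep (f : C(X, X)) (hf : BoundaryPreserving f)
    (h1 : Inessential (restrictMap f (hf.mono_left Set.subset_union_left : MapsTo f C1 Bd)))
    (h2 : Inessential (restrictMap f (hf.mono_left Set.subset_union_right : MapsTo f C2 Bd))) :
    ∃ f1 : C(X, X), BoundaryHomotopic f f1 ∧ ∃ b1 ∈ Bd, ∃ b2 ∈ Bd,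
      (∀ x, 13/16 ≤ rho x → f1 x = b1) ∧ (∀ x, rho x ≤ 5/16 → f1 x = b2) := by
  classical
  obtain ⟨b1, ⟨H1⟩⟩ := h1
  obtain ⟨b2, ⟨H2⟩⟩ := h2
  let v : X × unitInterval → ℝ := fun z => rho z.1 + z.2 * (rho z.1 - 1/2)
  have hv : Continuous v := by fun_prop
  have hlo : ∀ z : X × unitInterval, rho z.1 ≤ 1/2 → v z ≤ 1/2 := by
    intro z hz
    have := z.2.2.1
    simp only [v]; nlinarith
  have hhi : ∀ z : X × unitInterval, 1/2 ≤ rho z.1 → 1/2 ≤ v z := by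
    intro z hz
    have := z.2.2.1
    simp only [v]; nlinarith
  obtain ⟨S, hS, hS'⟩ := radial (fun z => max (1/4) (min 1 (v z))) (by fun_prop)
    (fun z => le_max_left _ _) (fun z => max_le (by norm_num) (min_le_left _ _))
    (fun z hz => max_le (by norm_num) (min_le_of_right_le (hlo z hz)))
    (fun z hz => le_max_of_le_right (le_min (by norm_num) (hhi z hz)))
  let τ : X × unitInterval → ℝ := fun z => max 0 (max (1/4 - v z) (v z - 1)) * 8
  have hτ : Continuous τ := by fun_prop
  let τ' : X × unitInterval → unitInterval := fun z => Set.projIcc 0 1 zero_le_one (τ z)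
  have hτ' : Continuous τ' := continuous_projIcc.comp hτ
  let hh : X → unitInterval → X := fun z t =>
    if h : z ∈ C1 then (H1 (t, ⟨z, h⟩)).1 else if h : z ∈ C2 then (H2 (t, ⟨z, h⟩)).1 else f z
  have C12 : ∀ z : X, z ∈ C2 → z ∉ C1 := by
    intro z hz hz'
    rw [mem_C1] at hz'; rw [mem_C2] at hz; linarith
  have hh1 : ∀ z t (h : z ∈ C1), hh z t = (H1 (t, ⟨z, h⟩)).1 := fun z t h => by simp [hh, h]
  have hh2 : ∀ z t (h : z ∈ C2), hh z t = (H2 (t, ⟨z, h⟩)).1 := fun z t h => by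
    simp [hh, h, C12 z h]
  have hh0 : ∀ z, hh z 0 = f z := by
    intro z
    by_cases c1 : z ∈ C1
    · rw [hh1 z 0 c1, H1.apply_zero]; rfl
    by_cases c2 : z ∈ C2
    · rw [hh2 z 0 c2, H2.apply_zero]; rfl
    simp [hh, c1, c2]
  have hhB : ∀ z t, z ∈ Bd → hh z t ∈ Bd := by
    rintro z t (c1 | c2)
    · rw [hh1 z t c1]; exact (H1 _).2
    · rw [hh2 z t c2]; exact (H2 _).2
  have hSC1 : ∀ z, 1 ≤ v z → S z ∈ C1 := by
    intro z hz; rw [mem_C1, hS, min_eq_left hz]; norm_num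
  have hSC2 : ∀ z, v z ≤ 1/4 → S z ∈ C2 := by
    intro z hz
    rw [mem_C2, hS]; exact max_eq_left (min_le_of_right_le hz)
  have hFc : Continuous fun z => hh (S z) (τ' z) := by
    refine continuous_of_three hv (a := 1/4) (b := 1) ?_ ?_ ?_
    · rw [continuousOn_iff_continuous_domRestrict]
      have : Continuous fun z : {z | v z ≤ 1/4} => (H2 (τ' z.1, ⟨S z.1, hSC2 _ z.2⟩)).1 := by
        refine continuous_subtype_val.comp (H2.continuous.comp ?_)
        refine (hτ'.comp continuous_subtype_val).prodMk ?_
        exact Continuous.subtype_mk (S.continuous.comp continuous_subtype_val) _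
      convert this using 1
      funext z
      exact hh2 _ _ _
    · have : ContinuousOn (fun z => f (S z)) {z | 1/4 ≤ v z ∧ v z ≤ 1} :=
        (f.continuous.comp S.continuous).continuousOn
      refine this.congr ?_
      rintro z ⟨z1, z2⟩
      have : τ z = 0 := by
        simp only [τ]
        rw [max_eq_left (max_le (by linarith) (by linarith))]; simp
      have : τ' z = 0 := by simp only [τ', this]; simp
      simp only [this, hh0]
    · rw [continuousOn_iff_continuous_domRestrict]
      have : Continuous fun z : {z | 1 ≤ v z} => (H1 (τ' z.1, ⟨S z.1, hSC1 _ z.2⟩)).1 := by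
        refine continuous_subtype_val.comp (H1.continuous.comp ?_)
        refine (hτ'.comp continuous_subtype_val).prodMk ?_
        exact Continuous.subtype_mk (S.continuous.comp continuous_subtype_val) _
      convert this using 1
      funext z
      exact hh1 _ _ _
  let F : C(X × unitInterval, X) := ⟨fun z => hh (S z) (τ' z), hFc⟩
  let f1 : C(X, X) := ⟨fun x => F (x, 1), by fun_prop⟩
  refine ⟨f1, bh_of F ?_ (fun _ => rfl) ?_, b1, b1.2, b2, b2.2, ?_, ?_⟩
  · intro x
    have hvx : v (x, 0) = rho x := by simp [v]
    have := rho_ge x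
    have := rho_le x
    have e1 : τ (x, 0) = 0 := by
      simp only [τ, hvx]
      rw [max_eq_left (max_le (by linarith) (by linarith))]; simp
    have e2 : τ' (x, 0) = 0 := by simp only [τ', e1]; simp
    have e3 : S (x, 0) = x := by
      apply hS'
      rw [hvx, min_eq_right (by linarith), max_eq_right (by linarith)]
    change hh (S (x, 0)) (τ' (x, 0)) = f x
    rw [e2, e3, hh0]
  · intro x hx s
    apply hhB
    have := s.2.1
    rcases (mem_Bd x).mp hx with h | h
    · left; apply hSC1; simp only [v, h]; linarith
    · right; apply hSC2; simp only [v, h]; linarith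
  · intro x hx
    have hvx : v (x, 1) = 2 * rho x - 1/2 := by simp [v]; ring
    have c : S (x, 1) ∈ C1 := hSC1 _ (by rw [hvx]; linarith)
    have e2 : τ' (x, 1) = 1 := by
      apply projIcc_of_right_le
      simp only [τ, hvx]
      have := le_max_right 0 (max (1/4 - (2 * rho x - 1/2)) (2 * rho x - 1/2 - 1))
      have := le_max_right (1/4 - (2 * rho x - 1/2)) (2 * rho x - 1/2 - 1)
      linarith
    change hh (S (x, 1)) (τ' (x, 1)) = _
    rw [e2, hh1 _ _ c, H1.apply_one]; rfl
  · intro x hx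
    have hvx : v (x, 1) = 2 * rho x - 1/2 := by simp [v]; ring
    have c : S (x, 1) ∈ C2 := hSC2 _ (by rw [hvx]; linarith)
    have e2 : τ' (x, 1) = 1 := by
      apply projIcc_of_right_le
      simp only [τ, hvx]
      have := le_max_right 0 (max (1/4 - (2 * rho x - 1/2)) (2 * rho x - 1/2 - 1))
      have := le_max_left (1/4 - (2 * rho x - 1/2)) (2 * rho x - 1/2 - 1)
      linarith
    change hh (S (x, 1)) (τ' (x, 1)) = _
    rw [e2, hh2 _ _ c, H2.apply_one]; rfl


/-! ### Retraction of the surface to a graph -/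

/-- First coordinate of the retraction to the graph. -/
noncomputable def ac (p : ℝ × ℝ) : ℝ :=
  p.1 - max 0 (min p.1 (1/2 - p.1) - |p.2|) + max 0 (min (1 - p.1) (p.1 - 1/2) - |p.2|)

lemma ac_continuous : Continuous ac := by unfold ac; fun_prop

lemma ac_cases {p : ℝ × ℝ} (hp : p ∈ SqX) : (p.1 ≤ 1/4 ∧ ac p = min p.1 |p.2|) ∨
    (3/4 ≤ p.1 ∧ ac p = 1 - min (1 - p.1) |p.2|) ∨
    (1/4 ≤ p.1 ∧ p.1 ≤ 3/4 ∧ 1/4 ≤ |p.2| ∧ ac p = p.1) := by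
  obtain ⟨⟨hx, hy⟩, hr⟩ := hp
  have hy0 := abs_nonneg p.2
  rcases le_or_gt p.1 (1/4) with h1 | h1
  · left
    refine ⟨h1, ?_⟩
    unfold ac
    rw [min_eq_left (by linarith : p.1 ≤ 1/2 - p.1), max_eq_left (b := min (1 - p.1) _ - _)]
    · rcases le_total p.1 |p.2| with h | h
      · rw [min_eq_left h, max_eq_left (by linarith)]; ring
      · rw [min_eq_right h, max_eq_right (by linarith)]; ring
    · have := min_le_right (1 - p.1) (p.1 - 1/2); linarith
  rcases le_or_gt (3/4) p.1 with h2 | h2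
  · right; left
    refine ⟨h2, ?_⟩
    unfold ac
    rw [min_eq_left (by linarith : 1 - p.1 ≤ p.1 - 1/2), max_eq_left (b := min p.1 _ - _)]
    · rcases le_total (1 - p.1) |p.2| with h | h
      · rw [min_eq_left h, max_eq_left (by linarith)]; ring
      · rw [min_eq_right h, max_eq_right (by linarith)]; ring
    · have := min_le_right p.1 (1/2 - p.1); linarith
  right; right
  have hy4 : 1/4 ≤ |p.2| := by
    rcases le_max_iff.mp hr with h | h
    · exfalso
      rcases le_abs.mp h with h | h <;> linarith
    · exact h
  refine ⟨h1.le, h2.le, hy4, ?_⟩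
  unfold ac
  have a1 : min p.1 (1/2 - p.1) ≤ 1/4 := by
    rcases le_total p.1 (1/4) with h | h
    · exact min_le_of_left_le h
    · exact min_le_of_right_le (by linarith)
  have a2 : min (1 - p.1) (p.1 - 1/2) ≤ 1/4 := by
    rcases le_total (1 - p.1) (1/4) with h | h
    · exact min_le_of_left_le h
    · exact min_le_of_right_le (by linarith)
  rw [max_eq_left (by linarith), max_eq_left (by linarith)]; ring

lemma ac_mem {p : ℝ × ℝ} (hp : p ∈ SqX) : ac p ∈ Icc (0 : ℝ) 1 := by
  have h0 := hp.1.1.1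
  have h1 := hp.1.1.2
  have hy0 := abs_nonneg p.2
  rcases ac_cases hp with ⟨h, e⟩ | ⟨h, e⟩ | ⟨h, h', _, e⟩ <;> rw [e]
  · exact ⟨le_min h0 hy0, min_le_of_left_le h1⟩
  · have : 0 ≤ min (1 - p.1) |p.2| := le_min (by linarith) hy0
    have := min_le_left (1 - p.1) |p.2|
    exact ⟨by linarith, by linarith⟩
  · exact ⟨h0, h1⟩

/-- Height of the graph. -/
noncomputable def cc (h : ℝ) : ℝ := min (min h (1 - h)) (1/4)

lemma cc_continuous : Continuous cc := by unfold cc; fun_prop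

lemma cc_nonneg {h : ℝ} (hh : h ∈ Icc (0 : ℝ) 1) : 0 ≤ cc h :=
  le_min (le_min hh.1 (by linarith [hh.2])) (by norm_num)

lemma cc_le (h : ℝ) : cc h ≤ 1/4 := min_le_right _ _

lemma cc_zero : cc 0 = 0 := by unfold cc; norm_num

lemma cc_one : cc 1 = 0 := by unfold cc; norm_num

lemma graph_mem {h y : ℝ} (hh : h ∈ Icc (0 : ℝ) 1) (hy : |y| = cc h) : (h, y) ∈ SqX := by
  have h1 := cc_le h
  have : |y| ≤ 1 := by linarith
  refine ⟨⟨hh, abs_le.mp this⟩, ?_⟩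
  change 1/4 ≤ max |h - 1/2| |y|
  rcases le_or_gt h (1/4) with h2 | h2
  · apply le_max_of_le_left; rw [le_abs]; right; linarith
  rcases le_or_gt (3/4) h with h3 | h3
  · apply le_max_of_le_left; rw [le_abs]; left; linarith
  · apply le_max_of_le_right
    rw [hy]
    exact le_min (le_min (by linarith) (by linarith)) le_rfl

lemma cc_ac_le {p : ℝ × ℝ} (hp : p ∈ SqX) : cc (ac p) ≤ |p.2| := by
  rcases ac_cases hp with ⟨h, e⟩ | ⟨h, e⟩ | ⟨h, h', h4, e⟩
  · calc cc (ac p) ≤ ac p := (min_le_left _ _).trans (min_le_left _ _)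
      _ ≤ |p.2| := by rw [e]; exact min_le_right _ _
  · calc cc (ac p) ≤ 1 - ac p := (min_le_left _ _).trans (min_le_right _ _)
      _ ≤ |p.2| := by rw [e]; simp
  · exact (cc_le _).trans h4

/-- Second coordinate of the retraction. -/
noncomputable def bc (p : ℝ × ℝ) : ℝ := max (-cc (ac p)) (min (cc (ac p)) p.2)

lemma bc_continuous : Continuous bc := by
  have := cc_continuous.comp ac_continuous
  unfold bc
  exact this.neg.max (this.min continuous_snd)

lemma bc_pos {p : ℝ × ℝ} (hp : p ∈ SqX) (h : 0 ≤ p.2) : bc p = cc (ac p) := by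
  have h1 := cc_ac_le hp
  have h2 := cc_nonneg (ac_mem hp)
  rw [abs_of_nonneg h] at h1
  unfold bc
  rw [min_eq_left h1, max_eq_right (by linarith)]

lemma bc_neg {p : ℝ × ℝ} (hp : p ∈ SqX) (h : p.2 ≤ 0) : bc p = - cc (ac p) := by
  have h1 := cc_ac_le hp
  have h2 := cc_nonneg (ac_mem hp)
  rw [abs_of_nonpos h] at h1
  unfold bc
  rw [max_eq_left]
  exact (min_le_right _ _).trans (by linarith)

lemma abs_bc {p : ℝ × ℝ} (hp : p ∈ SqX) : |bc p| = cc (ac p) := by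
  have h2 := cc_nonneg (ac_mem hp)
  rcases le_total 0 p.2 with h | h
  · rw [bc_pos hp h, abs_of_nonneg h2]
  · rw [bc_neg hp h, abs_neg, abs_of_nonneg h2]

lemma line_mem {p : ℝ × ℝ} (hp : p ∈ SqX) {s : ℝ} (hs : s ∈ Icc (0 : ℝ) 1) :
    (p.1 + s * (ac p - p.1), p.2 + s * (bc p - p.2)) ∈ SqX := by
  have hq := graph_mem (ac_mem hp) (abs_bc hp)
  obtain ⟨s0, s1⟩ := hs
  have hp1 : p ∈ Sq := hp.1
  have hq1 : (ac p, bc p) ∈ Sq := hq.1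
  have hconv : Convex ℝ Sq := (convex_Icc _ _).prod (convex_Icc _ _)
  have hm : (p.1 + s * (ac p - p.1), p.2 + s * (bc p - p.2)) ∈ Sq := by
    have := hconv hp1 hq1 (by linarith : 0 ≤ 1 - s) s0 (by ring)
    convert this using 1
    ext <;> simp <;> ring
  refine ⟨hm, ?_⟩
  change 1/4 ≤ max |p.1 + s * (ac p - p.1) - 1/2| |p.2 + s * (bc p - p.2)|
  rcases ac_cases hp with ⟨h, e⟩ | ⟨h, e⟩ | ⟨h, h', h4, e⟩
  · have : ac p ≤ 1/4 := by rw [e]; exact min_le_of_left_le h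
    apply le_max_of_le_left; rw [le_abs]; right
    nlinarith
  · have : 3/4 ≤ ac p := by
      rw [e]; have := min_le_left (1 - p.1) |p.2|; linarith
    apply le_max_of_le_left; rw [le_abs]; left
    nlinarith
  · apply le_max_of_le_right
    have hc : cc (ac p) = 1/4 := by
      rw [e]; exact min_eq_right (le_min h (by linarith))
    rcases le_total 0 p.2 with h0 | h0
    · rw [abs_of_nonneg h0] at h4
      rw [bc_pos hp h0, hc, le_abs]; left; nlinarith
    · rw [abs_of_nonpos h0] at h4
      rw [bc_neg hp h0, hc, le_abs]; right; nlinarith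

lemma ac_left {p : ℝ × ℝ} (hp : p ∈ SqX) (h : p.1 = 0) : ac p = 0 := by
  rcases ac_cases hp with ⟨_, e⟩ | ⟨h', e⟩ | ⟨h', _, _, e⟩
  · rw [e, h]; exact min_eq_left (abs_nonneg _)
  · linarith
  · linarith

lemma ac_right {p : ℝ × ℝ} (hp : p ∈ SqX) (h : p.1 = 1) : ac p = 1 := by
  rcases ac_cases hp with ⟨_, e⟩ | ⟨h', e⟩ | ⟨h', _, _, e⟩
  · linarith
  · rw [e, h, sub_self, min_eq_left (abs_nonneg _)]; simp
  · linarith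

lemma ac_mid {p : ℝ × ℝ} (hp : p ∈ SqX) (h : p.2 = 0) : ac p = 0 ∨ ac p = 1 := by
  have hx := hp.1.1
  rcases ac_cases hp with ⟨_, e⟩ | ⟨h', e⟩ | ⟨h', _, h4, e⟩
  · left; rw [e, h, abs_zero, min_eq_right hx.1]
  · right; rw [e, h, abs_zero, min_eq_right (by linarith [hx.2])]; simp
  · rw [h, abs_zero] at h4; norm_num at h4

lemma segT_continuous (w : Gam) (i : Bool) : Continuous (segT w i) := by
  refine Continuous.subtype_mk ?_ _
  unfold seg
  exact continuous_const.update _ continuous_subtype_val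

lemma tq_continuous : Continuous tq := tq_covering.isCoveringMap.continuous

lemma tq_smul (g : Gam) (x : T) : tq (g • x) = tq x :=
  Quotient.sound ⟨g, rfl⟩

lemma tq_seg_end (w : Gam) (i : Bool) (h : Icc (0 : ℝ) 1) (hh : (h : ℝ) = 0 ∨ (h : ℝ) = 1) :
    tq (segT w i h) = tq (vertT 1) := by
  have hv : ∀ w, tq (vertT w) = tq (vertT 1) := by
    intro w
    have : vertT w = w • vertT 1 := by
      apply Subtype.ext; funext e
      rw [smul_apply]
      have := vert_smul w 1 e
      rw [mul_one] at this
      exact this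
    rw [this, tq_smul]
  obtain ⟨h, h'⟩ := h
  rcases hh with hh | hh
  · have : segT w i ⟨h, h'⟩ = vertT w := Subtype.ext (by simp only at hh; subst hh; exact seg_zero w i)
    rw [this, hv]
  · have : segT w i ⟨h, h'⟩ = vertT (w * FreeGroup.of i) :=
      Subtype.ext (by simp only at hh; subst hh; exact seg_one w i)
    rw [this, hv]

/-- Up to homotopy, the identity of the surface factors through the graph. -/
lemma factor : ∃ (r : C(X, TQ)) (k : C(TQ, X)) (G : C(X × unitInterval, X)),
    (∀ x, G (x, 0) = x) ∧ ∀ x, G (x, 1) = k (r x) := by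
  classical
  -- the loops
  let sg : Bool → ℝ := fun i => if i then 1 else -1
  let cl : ℝ → Icc (0 : ℝ) 1 := fun h => projIcc 0 1 zero_le_one h
  have hsg : ∀ i, |sg i| = 1 := by intro i; cases i <;> simp [sg]
  have hlm : ∀ i h, ((cl h : ℝ), sg i * cc (cl h)) ∈ SqX := fun i h =>
    graph_mem (cl h).2 (by rw [abs_mul, hsg, one_mul, abs_of_nonneg (cc_nonneg (cl h).2)])
  have hclc : Continuous fun h => (cl h : ℝ) := continuous_subtype_val.comp continuous_projIcc
  let l : Bool → C(ℝ, X) := fun i => ⟨fun h => qX ⟨_, hlm i h⟩, qX_continuous.comp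
    (Continuous.subtype_mk (hclc.prodMk (continuous_const.mul (cc_continuous.comp hclc))) _)⟩
  have hcl : ∀ h : Icc (0 : ℝ) 1, cl h = h := fun h => projIcc_val _ h
  have hl : ∀ i (h : Icc (0 : ℝ) 1) (y : ℝ) (hm : ((h : ℝ), y) ∈ SqX), y = sg i * cc h →
      l i h = qX ⟨((h : ℝ), y), hm⟩ := by
    intro i h y hm hy
    change qX ⟨_, _⟩ = _
    congr 1
    apply Subtype.ext
    simp only [hcl, hy]
  have hO : ((0 : ℝ), (0 : ℝ)) ∈ SqX := graph_mem (by simp) (by rw [cc_zero, abs_zero])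
  have hO1 : ((1 : ℝ), (0 : ℝ)) ∈ SqX := graph_mem (by simp) (by rw [cc_one, abs_zero])
  obtain ⟨k, hk⟩ := exists_graph_map l (qX ⟨_, hO⟩)
    (fun i => hl i ⟨0, by simp⟩ 0 hO (by simp [cc_zero]))
    (fun i => (hl i ⟨1, by simp⟩ 0 hO1 (by simp [cc_one])).trans
      ((qX_eq_iff _ _).mpr (Or.inr (Or.inr ⟨rfl, rfl, by simp⟩))))
  -- the retraction
  let A : SqX → Icc (0 : ℝ) 1 := fun p => ⟨ac p, ac_mem p.2⟩
  have hA : Continuous A := Continuous.subtype_mk (ac_continuous.comp continuous_subtype_val) _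
  let r0 : SqX → TQ := fun p => if 0 ≤ p.1.2 then tq (segT 1 true (A p)) else tq (segT 1 false (A p))
  have hr0 : Continuous r0 := by
    refine continuous_if_le continuous_const (continuous_snd.comp continuous_subtype_val) ?_ ?_ ?_
    · exact (tq_continuous.comp ((segT_continuous _ _).comp hA)).continuousOn
    · exact (tq_continuous.comp ((segT_continuous _ _).comp hA)).continuousOn
    · intro p hp
      rw [tq_seg_end _ _ _ (ac_mid p.2 hp.symm), tq_seg_end _ _ _ (ac_mid p.2 hp.symm)]
  have hend : ∀ p : SqX, ac p = 0 ∨ ac p = 1 → r0 p = tq (vertT 1) := by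
    intro p hp
    simp only [r0]
    rw [tq_seg_end _ _ _ hp, tq_seg_end _ _ _ hp]; simp
  obtain ⟨r, hr⟩ := descend_one r0 hr0 (by
    intro p q h1 h2 _
    rw [hend p (Or.inl (ac_left p.2 h1)), hend q (Or.inr (ac_right q.2 h2))])
  -- the homotopy
  let L : SqX × unitInterval → ℝ × ℝ := fun z =>
    (z.1.1.1 + z.2 * (ac z.1 - z.1.1.1), z.1.1.2 + z.2 * (bc z.1 - z.1.1.2))
  have hLc : Continuous L := by
    have a0 : Continuous fun z : SqX × unitInterval => (z.1 : ℝ × ℝ) :=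
      continuous_subtype_val.comp continuous_fst
    have a1 : Continuous fun z : SqX × unitInterval => z.1.1.1 := continuous_fst.comp a0
    have a2 : Continuous fun z : SqX × unitInterval => z.1.1.2 := continuous_snd.comp a0
    have a3 : Continuous fun z : SqX × unitInterval => (z.2 : ℝ) :=
      continuous_subtype_val.comp continuous_snd
    have a4 := ac_continuous.comp a0
    have a5 := bc_continuous.comp a0
    exact (a1.add (a3.mul (a4.sub a1))).prodMk (a2.add (a3.mul (a5.sub a2)))
  have hLm : ∀ z, L z ∈ SqX := fun z => line_mem z.1.2 z.2.2
  obtain ⟨G, hG⟩ := descend (fun z => qX ⟨L z, hLm z⟩)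
    (qX_continuous.comp (Continuous.subtype_mk hLc _)) (by
      intro p q y h1 h2 h3
      rw [qX_eq_iff]
      right; left
      have bp : bc p = 0 := abs_eq_zero.mp (by rw [abs_bc p.2, ac_left p.2 h1, cc_zero])
      have bq : bc q = 0 := abs_eq_zero.mp (by rw [abs_bc q.2, ac_right q.2 h2, cc_one])
      refine ⟨?_, ?_, ?_⟩
      · simp [L, ac_left p.2 h1, h1]
      · simp [L, ac_right q.2 h2, h2]
      · simp only [L, bp, bq, h3]; ring)
  refine ⟨r, k, G, ?_, ?_⟩
  · intro x
    obtain ⟨p, rfl⟩ := qX_surjective x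
    rw [hG]
    congr 1
    apply Subtype.ext
    simp [L]
  · intro x
    obtain ⟨p, rfl⟩ := qX_surjective x
    rw [hG, hr]
    have hLp : L (p, 1) = (ac p, bc p) := by simp [L]
    have hm : (((A p : Icc (0 : ℝ) 1) : ℝ), bc p) ∈ SqX := graph_mem (ac_mem p.2) (abs_bc p.2)
    have e1 : qX ⟨L (p, 1), hLm (p, 1)⟩ = qX ⟨(((A p : Icc (0 : ℝ) 1) : ℝ), bc p), hm⟩ := by
      congr 1
      exact Subtype.ext hLp
    rw [e1]
    simp only [r0]
    split_ifs with h
    · rw [hk]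
      exact (hl true (A p) _ hm (by simp [sg, bc_pos p.2 h, A])).symm
    · rw [hk]
      exact (hl false (A p) _ hm (by simp [sg, bc_neg p.2 (not_le.mp h).le, A])).symm


/-! ### Lifting to the tree -/

lemma side_of_rad {p : ℝ × ℝ} (hp : p ∈ Sq) (h : 13/16 ≤ rad p) : 13/16 ≤ p.2 ∨ p.2 ≤ -(13/16) := by
  have hx : |p.1 - 1/2| ≤ 1/2 := abs_le.mpr ⟨by linarith [hp.1.1], by linarith [hp.1.2]⟩
  rcases le_max_iff.mp h with h | h
  · linarith
  · rcases le_abs.mp h with h | h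
    · exact Or.inl h
    · exact Or.inr (by linarith)

lemma exists_lift (f2 : C(X, TQ)) (c1 c2 : TQ) (h1 : ∀ x, 13/16 ≤ rho x → f2 x = c1)
    (h2 : ∀ x, rho x ≤ 5/16 → f2 x = c2) : ∃ Φ : C(X, T), (∀ x, tq (Φ x) = f2 x) ∧
      (∃ e1, ∀ x, 13/16 ≤ rho x → Φ x = e1) ∧ ∃ e2, ∀ x, rho x ≤ 5/16 → Φ x = e2 := by
  classical
  let cl : ℝ × ℝ → ℝ × ℝ := fun p => (max 0 (min 1 p.1), max (-1) (min 1 p.2))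
  have hcl : Continuous cl := by fun_prop
  have hclm : ∀ p, cl p ∈ Sq := fun p =>
    ⟨⟨le_max_left _ _, max_le (by norm_num) (min_le_left _ _)⟩,
      ⟨le_max_left _ _, max_le (by norm_num) (min_le_left _ _)⟩⟩
  have hcle : ∀ p ∈ Sq, cl p = p := by
    rintro ⟨x, y⟩ ⟨⟨a, b⟩, ⟨c, d⟩⟩
    simp only at a b c d
    simp only [cl]
    rw [min_eq_right b, min_eq_right d, max_eq_right a, max_eq_right c]
  let F0 : ℝ × ℝ → TQ := fun p =>
    if h : 1/4 ≤ rad (cl p) then f2 (qX ⟨cl p, hclm p, h⟩) else c2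
  have F0_pos : ∀ p (h : 1/4 ≤ rad (cl p)), F0 p = f2 (qX ⟨cl p, hclm p, h⟩) := fun p h => by
    simp only [F0]; rw [dif_pos h]
  have F0_in : ∀ p, rad (cl p) ≤ 5/16 → F0 p = c2 := by
    intro p hp
    by_cases h : 1/4 ≤ rad (cl p)
    · rw [F0_pos p h]
      apply h2; rw [rho_qX]; exact hp
    · simp only [F0]; rw [dif_neg h]
  have F0_out : ∀ p, 13/16 ≤ rad (cl p) → F0 p = c1 := by
    intro p hp
    rw [F0_pos p (by linarith)]
    apply h1; rw [rho_qX]; exact hp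
  have F0_cont : Continuous F0 := by
    have hin : ContinuousOn F0 {z | rad (cl z) ≤ 1/4} :=
      (continuousOn_const (c := c2)).congr fun z hz => F0_in z (hz.trans (by norm_num))
    have hout : ContinuousOn F0 {z | 1/4 ≤ rad (cl z)} := by
      rw [continuousOn_iff_continuous_domRestrict]
      have : Continuous fun z : {z | 1/4 ≤ rad (cl z)} => f2 (qX ⟨cl z, hclm z, z.2⟩) := by
        refine f2.continuous.comp (qX_continuous.comp ?_)
        exact Continuous.subtype_mk (hcl.comp continuous_subtype_val) _
      convert this using 1
      funext z
      exact F0_pos z.1 z.2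
    exact continuous_of_three (rad_continuous.comp hcl) hin (hin.mono fun z hz => hz.2) hout
  have hcov := tq_covering.isCoveringMap
  obtain ⟨e0, he0⟩ := tq_covering.toIsQuotientMap.surjective (F0 (0, 0))
  obtain ⟨Ψ, ⟨-, hΨ⟩, -⟩ := hcov.existsUnique_continuousMap_lifts ⟨F0, F0_cont⟩ (0, 0) e0 he0
  have hΨ' : ∀ p, tq (Ψ p) = F0 p := fun p => congrFun hΨ p
  have constOn : ∀ (s : Set (ℝ × ℝ)) (c : TQ), Convex ℝ s → (∀ p ∈ s, F0 p = c) →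
      ∀ p ∈ s, ∀ q ∈ s, Ψ p = Ψ q := by
    intro s c hs hc p hp q hq
    refine hcov.constOn_of_comp hs.isPreconnected Ψ.continuous.continuousOn ?_ hp hq
    intro a ha b hb
    rw [hΨ', hΨ', hc a ha, hc b hb]
  have rad2 : ∀ p, |p.2| ≤ rad p := fun p => le_max_right _ _
  have htop := constOn (univ ×ˢ Ici (13/16)) c1 (convex_univ.prod (convex_Ici _)) (by
    rintro ⟨x, y⟩ ⟨-, hy⟩
    apply F0_out
    refine le_trans ?_ (rad2 _)
    rw [le_abs]; left
    exact le_max_of_le_right (le_min (by norm_num) hy))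
  have hbot := constOn (univ ×ˢ Iic (-(13/16))) c1 (convex_univ.prod (convex_Iic _)) (by
    rintro ⟨x, y⟩ ⟨-, hy⟩
    apply F0_out
    refine le_trans ?_ (rad2 _)
    rw [le_abs]; right
    have : max (-1) (min 1 y) ≤ -(13/16) := max_le (by norm_num) (min_le_of_right_le hy)
    simp only [cl]; linarith)
  have hsq := constOn (Icc (3/16) (13/16) ×ˢ Icc (-(5/16)) (5/16)) c2
    ((convex_Icc _ _).prod (convex_Icc _ _)) (by
    rintro ⟨x, y⟩ ⟨⟨a, b⟩, ⟨c, d⟩⟩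
    simp only at a b c d
    apply F0_in
    rw [hcle _ ⟨⟨by simp only; linarith, by simp only; linarith⟩,
      ⟨by simp only; linarith, by simp only; linarith⟩⟩]
    exact max_le (abs_le.mpr ⟨by simp only; linarith, by simp only; linarith⟩)
      (abs_le.mpr ⟨by simp only; linarith, by simp only; linarith⟩))
  have top_mem : ∀ x : ℝ, (x, (1 : ℝ)) ∈ (univ ×ˢ Ici (13/16) : Set (ℝ × ℝ)) := fun x =>
    ⟨mem_univ _, by simp; norm_num⟩
  have bot_mem : ∀ x : ℝ, (x, (-1 : ℝ)) ∈ (univ ×ˢ Iic (-(13/16)) : Set (ℝ × ℝ)) := fun x =>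
    ⟨mem_univ _, by simp; norm_num⟩
  have hT : tq (Ψ (0, 1)) = tq (Ψ (0, -1)) := by
    have a : ∀ x y : ℝ, |y| = 1 → 13/16 ≤ rad (cl (x, y)) := by
      intro x y hy
      refine le_trans ?_ (rad2 _)
      rcases eq_or_eq_neg_of_abs_eq hy with rfl | rfl <;> simp [cl] <;> norm_num
    rw [hΨ', hΨ', F0_out _ (a _ _ (by simp)), F0_out _ (a _ _ (by simp))]
  obtain ⟨g, hg⟩ := tq_covering.apply_eq_iff_mem_orbit.mp hT
  simp only at hg
  have hside : ∀ y : ℝ, F0 (1, -y) = F0 (0, y) := by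
    intro y
    have hr1 : 1/4 ≤ rad (cl (1, -y)) := by
      refine le_trans ?_ (le_max_left _ _); simp [cl]; norm_num
    have hr0 : 1/4 ≤ rad (cl (0, y)) := by
      refine le_trans ?_ (le_max_left _ _); simp [cl]; norm_num
    rw [F0_pos _ hr1, F0_pos _ hr0]
    congr 1
    rw [qX_eq_iff]
    right; right
    refine ⟨by simp [cl], by simp [cl], ?_⟩
    simp only [cl]
    rcases le_total y 1 with hy | hy
    · rcases le_total (-1) y with hy' | hy'
      · rw [min_eq_right hy, max_eq_right hy', min_eq_right (by linarith), max_eq_right (by linarith)]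
        ring
      · rw [min_eq_right hy, max_eq_left hy', min_eq_left (by linarith), max_eq_right (by norm_num)]
    · rw [min_eq_left hy, max_eq_right (by norm_num), min_eq_right (by linarith),
        max_eq_left (by linarith)]; ring
  have hcsm : Continuous fun x : T => g • x := by
    refine Continuous.subtype_mk ?_ _
    exact continuous_pi fun e => (continuous_apply _).comp continuous_subtype_val
  have huniq : (fun y : ℝ => Ψ (1, -y)) = fun y : ℝ => g • Ψ (0, y) := by
    refine hcov.eq_of_comp_eq (by fun_prop) (hcsm.comp (by fun_prop)) ?_ (-1) ?_
    · funext y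
      simp only [Function.comp_apply, tq_smul]
      rw [hΨ', hΨ', hside]
    · simp only [neg_neg]
      rw [hg]
      exact htop _ (top_mem _) _ (top_mem _)
  have hy1 : Ψ (0, -1) = g • Ψ (0, 1) := by
    rw [hbot _ (bot_mem 0) _ (bot_mem 1)]
    exact congrFun huniq 1
  have hgg : g = 1 := by
    have := tq_covering.isCancelSMul
    have e1 : (g ^ 2) • Ψ (0, -1) = (1 : Gam) • Ψ (0, -1) := by
      rw [pow_two, mul_smul, hg, ← hy1, one_smul]
    have e2 := IsCancelSMul.right_cancel _ _ _ e1
    exact IsMulTorsionFree.pow_left_injective two_ne_zero (by simpa using e2)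
  subst hgg
  simp only [one_smul] at hg huniq
  obtain ⟨Φ, hΦ⟩ := descend_one (fun p : SqX => Ψ p.1) (Ψ.continuous.comp continuous_subtype_val) (by
    rintro ⟨⟨x, y⟩, hp⟩ ⟨⟨x', y'⟩, hq⟩ e1 e2 e3
    simp only at e1 e2 e3 ⊢
    subst e1; subst e2; subst e3
    have := congrFun huniq (-y')
    simp only [neg_neg] at this
    exact this.symm)
  refine ⟨Φ, ?_, ⟨Ψ (0, 1), ?_⟩, ⟨Ψ (1/2, 0), ?_⟩⟩
  · intro x
    obtain ⟨p, rfl⟩ := qX_surjective x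
    rw [hΦ, hΨ']
    have e : cl p.1 = p.1 := hcle _ p.2.1
    rw [F0_pos _ (by rw [e]; exact p.2.2)]
    congr 2
    exact Subtype.ext e
  · intro x hx
    obtain ⟨p, rfl⟩ := qX_surjective x
    rw [rho_qX] at hx
    rw [hΦ]
    rcases side_of_rad p.2.1 hx with h | h
    · exact htop _ ⟨mem_univ _, h⟩ _ (top_mem _)
    · rw [← hg]
      exact hbot _ ⟨mem_univ _, h⟩ _ (bot_mem _)
  · intro x hx
    obtain ⟨p, rfl⟩ := qX_surjective x
    rw [rho_qX] at hx
    rw [hΦ]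
    obtain ⟨a, b⟩ := max_le_iff.mp hx
    rw [abs_le] at a b
    refine hsq _ ⟨⟨by linarith, by linarith⟩, ⟨by linarith, by linarith⟩⟩ _ ?_
    refine ⟨⟨?_, ?_⟩, ⟨?_, ?_⟩⟩ <;> norm_num

/-- The nullhomotopy. -/
lemma exists_null (f1 : C(X, X)) (b1 b2 : X) (h1 : ∀ x, 13/16 ≤ rho x → f1 x = b1)
    (h2 : ∀ x, rho x ≤ 5/16 → f1 x = b2) : ∃ (K : C(X × ℝ, X)) (o : X), (∀ x, K (x, 0) = f1 x) ∧
      (∀ x, K (x, 1) = o) ∧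
      (∀ x y s, 13/16 ≤ rho x → 13/16 ≤ rho y → K (x, s) = K (y, s)) ∧
      (∀ x y s, rho x ≤ 5/16 → rho y ≤ 5/16 → K (x, s) = K (y, s)) := by
  classical
  obtain ⟨r, k, G, hG0, hG1⟩ := factor
  obtain ⟨Φ, hΦ, ⟨e1, he1⟩, ⟨e2, he2⟩⟩ := exists_lift (r.comp f1) (r b1) (r b2)
    (fun x hx => by simp [h1 x hx]) (fun x hx => by simp [h2 x hx])
  obtain ⟨R, hR1, hR0⟩ := tree_contraction
  let K : X × ℝ → X := fun z => if z.2 ≤ 1/2 then G (f1 z.1, projIcc 0 1 zero_le_one (2 * z.2))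
    else k (tq (R (2 - 2 * z.2, Φ z.1)))
  have hK : Continuous K := by
    refine continuous_if_le continuous_snd continuous_const ?_ ?_ ?_
    · refine (G.continuous.comp ((f1.continuous.comp continuous_fst).prodMk
        (continuous_projIcc.comp (by fun_prop)))).continuousOn
    · refine (k.continuous.comp (tq_continuous.comp (R.continuous.comp ?_))).continuousOn
      fun_prop
    · rintro ⟨x, s⟩ hs
      simp only at hs
      subst hs
      have : projIcc (0 : ℝ) 1 zero_le_one (2 * (1/2)) = 1 := by
        apply projIcc_of_right_le; norm_num
      simp only [this]
      have e : (2 - 2 * (1/2) : ℝ) = 1 := by norm_num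
      rw [e, hR1, hΦ, hG1]; rfl
  refine ⟨⟨K, hK⟩, k (tq (vertT 1)), ?_, ?_, ?_, ?_⟩
  · intro x
    change K (x, 0) = _
    simp only [K]
    rw [if_pos (by norm_num)]
    have : projIcc (0 : ℝ) 1 zero_le_one (2 * 0) = 0 := by
      apply projIcc_of_le_left; norm_num
    rw [this, hG0]
  · intro x
    change K (x, 1) = _
    simp only [K]
    rw [if_neg (by norm_num)]
    have e : (2 - 2 * 1 : ℝ) = 0 := by norm_num
    rw [e, hR0]
  · intro x y s hx hy
    change K (x, s) = K (y, s)
    simp only [K, h1 x hx, h1 y hy, he1 x hx, he1 y hy]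
  · intro x y s hx hy
    change K (x, s) = K (y, s)
    simp only [K, h2 x hx, h2 y hy, he2 x hx, he2 y hy]


/-! ### The final deformation -/

lemma exists_final (f1 : C(X, X)) (b1 b2 : X) (hb1 : b1 ∈ Bd) (hb2 : b2 ∈ Bd)
    (h1 : ∀ x, 13/16 ≤ rho x → f1 x = b1) (h2 : ∀ x, rho x ≤ 5/16 → f1 x = b2) :
    ∃ g : C(X, X), BoundaryHomotopic f1 g ∧ ∃ a b : X, {x : X | g x = x} ⊆ {a, b} := by
  classical
  obtain ⟨K, o, hK0, hK1, hKa, hKb⟩ := exists_null f1 b1 b2 h1 h2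
  obtain ⟨x1, hx1⟩ : ∃ x1 : X, rho x1 = 1 := by
    have hr : rad ((0 : ℝ), (1 : ℝ)) = 1 := by unfold rad; norm_num [abs_of_nonneg]
    exact ⟨qX ⟨(0, 1), ⟨⟨by simp, by simp⟩, by rw [hr]; norm_num⟩⟩, by rw [rho_qX, hr]⟩
  obtain ⟨x2, hx2⟩ : ∃ x2 : X, rho x2 = 1/4 := by
    have hr : rad ((1/4 : ℝ), (0 : ℝ)) = 1/4 := by
      unfold rad
      have : |(1/4 : ℝ) - 1/2| = 1/4 := by rw [abs_of_nonpos] <;> norm_num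
      simp only [this, abs_zero]; norm_num
    exact ⟨qX ⟨(1/4, 0), ⟨⟨⟨by norm_num, by norm_num⟩, by simp⟩, by rw [hr]⟩⟩, by rw [rho_qX, hr]⟩
  -- the path
  let γ0 : ℝ → X := fun t => if t ≤ 1/2 then K (x1, 2 * t) else K (x2, 2 - 2 * t)
  have hγ0 : Continuous γ0 := by
    refine continuous_if_le continuous_id continuous_const ?_ ?_ ?_
    · exact Continuous.continuousOn (by fun_prop)
    · exact Continuous.continuousOn (by fun_prop)
    · intro t ht
      subst ht
      have e1 : (2 * (1/2) : ℝ) = 1 := by norm_num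
      have e2 : (2 - 1 : ℝ) = 1 := by norm_num
      rw [e1, e2, hK1, hK1]
  let γ : C(ℝ, X) := ⟨γ0, hγ0⟩
  have hγl : ∀ t, t ≤ 1/2 → γ t = K (x1, 2 * t) := fun t ht => if_pos ht
  have hγr : ∀ t, 1/2 ≤ t → γ t = K (x2, 2 - 2 * t) := by
    intro t ht
    rcases ht.lt_or_eq with h | h
    · exact if_neg (by linarith)
    · rw [hγl t h.ge, ← h]
      have e1 : (2 * (1/2) : ℝ) = 1 := by norm_num
      have e2 : (2 - 1 : ℝ) = 1 := by norm_num
      rw [e1, e2, hK1, hK1]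
  have hγ_0 : γ 0 = b1 := by
    rw [hγl 0 (by norm_num), mul_zero, hK0]; apply h1; rw [hx1]; norm_num
  have hγ_1 : γ 1 = b2 := by
    have e : (2 - 2 * 1 : ℝ) = 0 := by norm_num
    rw [hγr 1 (by norm_num), e, hK0]; apply h2; rw [hx2]; norm_num
  -- cutoff
  let d : X → ℝ := fun x => min 1 (16 * min (rho x - 1/4) (1 - rho x))
  have hd : Continuous d := by fun_prop
  have hdB : ∀ x ∈ Bd, d x = 0 := by
    intro x hx
    rcases (mem_Bd x).mp hx with h | h <;> simp only [d, h] <;> norm_num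
  have hd0 : ∀ x, 0 ≤ d x := by
    intro x
    have := rho_ge x
    have := rho_le x
    exact le_min zero_le_one (mul_nonneg (by norm_num) (le_min (by linarith) (by linarith)))
  have hd1 : ∀ x, d x ≤ 1 := fun x => min_le_left _ _
  have hdm : ∀ x, 5/16 ≤ rho x → rho x ≤ 13/16 → d x = 1 := by
    intro x ha hb
    apply min_eq_left
    have : 1/16 ≤ min (rho x - 1/4) (1 - rho x) := le_min (by linarith) (by linarith)
    linarith
  let u1 : X → ℝ := fun x => if rho x ≤ 1/2 then 1 - d x / 2 else d x / 2
  have hu1 : Continuous u1 := by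
    refine continuous_if_le rho.continuous continuous_const ?_ ?_ ?_
    · exact Continuous.continuousOn (by fun_prop)
    · exact Continuous.continuousOn (by fun_prop)
    · intro x hx
      rw [hdm x (by rw [hx]; norm_num) (by rw [hx]; norm_num)]; norm_num
  let u2 : X → ℝ := fun x => max 0 (3 - 8 * rho x)
  have hu2 : Continuous u2 := by fun_prop
  have hu20 : ∀ x, 0 ≤ u2 x := fun x => le_max_left _ _
  have hu21 : ∀ x, u2 x ≤ 1 := fun x => max_le zero_le_one (by linarith [rho_ge x])
  have hγu1 : ∀ x, γ (u1 x) = K (x, d x) := by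
    intro x
    by_cases hx : rho x ≤ 1/2
    · have e : u1 x = 1 - d x / 2 := if_pos hx
      have e2 : (2 - 2 * (1 - d x / 2) : ℝ) = d x := by ring
      rw [e, hγr _ (by linarith [hd1 x]), e2]
      rcases le_total (rho x) (5/16) with h | h
      · exact hKb _ _ _ (by rw [hx2]; norm_num) h
      · rw [hdm x h (by linarith), hK1, hK1]
    · have e : u1 x = d x / 2 := if_neg hx
      have e2 : (2 * (d x / 2) : ℝ) = d x := by ring
      push Not at hx
      rw [e, hγl _ (by linarith [hd1 x]), e2]
      rcases le_total (13/16) (rho x) with h | h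
      · exact hKa _ _ _ (by rw [hx1]; norm_num) h
      · rw [hdm x (by linarith) h, hK1, hK1]
  have hu1B : ∀ x ∈ Bd, u1 x = u2 x ∧ (u2 x = 0 ∨ u2 x = 1) := by
    intro x hx
    have hdx := hdB x hx
    rcases (mem_Bd x).mp hx with h | h
    · have e1 : u1 x = 0 := by
        simp only [u1]; rw [if_neg (by rw [h]; norm_num), hdx]; norm_num
      have e2 : u2 x = 0 := by simp only [u2, h]; norm_num
      exact ⟨e1.trans e2.symm, Or.inl e2⟩
    · have e1 : u1 x = 1 := by
        simp only [u1]; rw [if_pos (by rw [h]; norm_num), hdx]; norm_num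
      have e2 : u2 x = 1 := by simp only [u2, h]; norm_num
      exact ⟨e1.trans e2.symm, Or.inr e2⟩
  have hγB : ∀ t : ℝ, t = 0 ∨ t = 1 → γ t ∈ Bd := by
    rintro t (rfl | rfl)
    · rw [hγ_0]; exact hb1
    · rw [hγ_1]; exact hb2
  -- first homotopy
  let g1 : C(X, X) := ⟨fun x => γ (u1 x), γ.continuous.comp hu1⟩
  have H1 : BoundaryHomotopic f1 g1 := by
    refine bh_of ⟨fun z => K (z.1, z.2 * d z.1), by fun_prop⟩ ?_ ?_ ?_
    · intro x; simp [hK0]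
    · intro x
      change K (x, ((1 : unitInterval) : ℝ) * d x) = γ (u1 x)
      rw [hγu1]; simp
    · intro x hx s
      simp only [ContinuousMap.coe_mk, hdB x hx, mul_zero, hK0]
      rcases (mem_Bd x).mp hx with h | h
      · rw [h1 x (by rw [h]; norm_num)]; exact hb1
      · rw [h2 x (by rw [h]; norm_num)]; exact hb2
  -- second homotopy
  let g2 : C(X, X) := ⟨fun x => γ (u2 x), γ.continuous.comp hu2⟩
  have H2 : BoundaryHomotopic g1 g2 := by
    refine bh_of ⟨fun z => γ (u1 z.1 + z.2 * (u2 z.1 - u1 z.1)), by fun_prop⟩ ?_ ?_ ?_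
    · intro x; simp [g1]
    · intro x; simp [g2]
    · intro x hx s
      simp only [ContinuousMap.coe_mk]
      rw [(hu1B x hx).1]
      simp only [sub_self, mul_zero, add_zero]
      exact hγB _ (hu1B x hx).2
  -- pushing off the inner collar
  obtain ⟨P, hP, hP'⟩ := radial (Y := unitInterval) (fun z => max (rho z.1) ((2 + z.2) / 8))
    (by fun_prop) (fun z => le_max_of_le_left (rho_ge _))
    (fun z => max_le (rho_le _) (by have := z.2.2.2; linarith))
    (fun z hz => max_le hz (by have := z.2.2.2; linarith))
    (fun z hz => le_max_of_le_left hz)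
  have hP0 : ∀ x, P (x, 0) = x := by
    intro x
    apply hP'
    have := rho_ge x
    exact max_eq_left (by change (2 + (0 : ℝ)) / 8 ≤ rho x; linarith)
  let κ : ℝ → ℝ := fun t => max 0 (min 1 (2 * t - 1/2))
  have hκ : Continuous κ := by fun_prop
  let τ : ℝ → unitInterval := fun t => projIcc 0 1 zero_le_one t
  have hτ : Continuous τ := continuous_projIcc
  have hτ0 : τ 0 = 0 := projIcc_left _
  let m : ℝ → ℝ := fun t => min (4 * t) (4 - 4 * t)
  have hm : Continuous m := by fun_prop
  let g' : ℝ → X := fun t => P (γ (κ t), τ (m t))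
  have hg' : Continuous g' := by fun_prop
  let g : C(X, X) := ⟨fun x => g' (u2 x), hg'.comp hu2⟩
  have H3 : BoundaryHomotopic g2 g := by
    refine bh_of ⟨fun z => P (γ (u2 z.1 + z.2 * (κ (u2 z.1) - u2 z.1)), τ (z.2 * m (u2 z.1))),
      by fun_prop⟩ ?_ ?_ ?_
    · intro x
      simp [hτ0, hP0, g2]
    · intro x
      simp [g, g']
    · intro x hx s
      simp only [ContinuousMap.coe_mk]
      have hk : κ (u2 x) = u2 x ∧ m (u2 x) = 0 := by
        rcases (hu1B x hx).2 with h | h <;> rw [h] <;> simp only [κ, m] <;> norm_num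
      rw [hk.1, hk.2, sub_self, mul_zero, hτ0, add_zero, hP0]
      exact hγB _ (hu1B x hx).2
  refine ⟨g, bh_trans H1 (bh_trans H2 H3), g' (if rho b1 = 1 then 0 else 1/5), g' 1, ?_⟩
  intro x hx
  have hx' : g' (u2 x) = x := hx
  have hρ : rho x = max (rho (γ (κ (u2 x)))) ((2 + (τ (m (u2 x)) : ℝ)) / 8) := by
    conv_lhs => rw [← hx']
    exact hP _
  suffices h : u2 x = (if rho b1 = 1 then 0 else 1/5) ∨ u2 x = 1 by
    rcases h with h | h
    · left; rw [← h, hx']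
    · right; rw [mem_singleton_iff, ← h, hx']
  have ht : u2 x = max 0 (3 - 8 * rho x) := rfl
  have t0 := hu20 x
  have t1 := hu21 x
  generalize u2 x = t at *
  have hτv : ∀ s : ℝ, 0 ≤ s → s ≤ 1 → (τ s : ℝ) = s := by
    intro s a b
    simp only [τ]
    rw [projIcc_of_mem zero_le_one ⟨a, b⟩]
  rcases lt_or_ge t (1/4) with ha | ha
  · left
    have hκt : κ t = 0 := max_eq_left (min_le_of_right_le (by linarith))
    have hmt : m t = 4 * t := min_eq_left (by linarith)
    rw [hκt, hγ_0, hmt, hτv _ (by linarith) (by linarith)] at hρ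
    rcases (mem_Bd b1).mp hb1 with h | h
    · rw [if_pos h]
      rw [h, max_eq_left (by linarith)] at hρ
      rw [ht, hρ]; norm_num
    · rw [if_neg (by rw [h]; norm_num)]
      rw [h, max_eq_right (by linarith)] at hρ
      rw [hρ, max_eq_right (by linarith)] at ht
      linarith
  rcases le_or_gt t (3/4) with hb | hb
  · exfalso
    have hmt : 1 ≤ m t := le_min (by linarith) (by linarith)
    have : τ (m t) = 1 := projIcc_of_right_le _ hmt
    rw [this] at hρ
    have h3 : (2 + 1 : ℝ) / 8 ≤ rho x := by rw [hρ]; exact le_max_right _ _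
    rw [max_eq_left (by linarith)] at ht
    linarith
  · right
    have hκt : κ t = 1 := by
      simp only [κ]
      rw [min_eq_left (by linarith)]; norm_num
    have hmt : m t = 4 - 4 * t := min_eq_right (by linarith)
    rw [hκt, hγ_1, hmt, hτv _ (by linarith) (by linarith)] at hρ
    rcases (mem_Bd b2).mp hb2 with h | h
    · exfalso
      rw [h, max_eq_left (by linarith)] at hρ
      rw [hρ] at ht
      norm_num at ht
      linarith
    · rw [h, max_eq_right (by linarith)] at hρ
      rw [hρ] at ht
      rcases max_choice 0 (3 - 8 * ((2 + (4 - 4 * t)) / 8)) with hc | hc <;> rw [hc] at ht <;> linarith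

/-- A boundary-inessential boundary-preserving map of the punctured Möbius band is
boundary-homotopic to a map with at most two fixed points. -/
theorem stmt_3 (f : C(X, X)) (hf : BoundaryPreserving f)
    (h1 : Inessential (restrictMap f (hf.mono_left Set.subset_union_left : MapsTo f C1 Bd)))
    (h2 : Inessential (restrictMap f (hf.mono_left Set.subset_union_right : MapsTo f C2 Bd))) :
    ∃ g : C(X, X), BoundaryHomotopic f g ∧ ∃ a b : X, {x : X | g x = x} ⊆ {a, b} := by
  obtain ⟨f1, hf1, b1, hb1, b2, hb2, c1, c2⟩ := hep f hf h1 h2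
  obtain ⟨g, hg, hfix⟩ := exists_final f1 b1 b2 hb1 hb2 c1 c2
  exact ⟨g, bh_trans hf1 hg, hfix⟩

end PMB
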